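/- arXiv:1808.01922 — 3 statements merged into one kernel-verified Lean document; each statement's English description precedes it below -/
import Mathlib

section
/- Let A be a Hopf algebra over a field k with bijective antipode S, and let P ∈ A be a nonzero idempotent. The following conditions are equivalent: (1) P is a right group-like projection and S(P) = P; (2) P is a right group-like projection and S²(P) = P; (3) P is a right group-like projection and P·S(P) = S(P)·P; (4) P is a left group-like projection and S(P) = P; (5) P is a left group-like projection and S²(P) = P; (6) P is a left group-like projection and P·S(P) = S(P)·P; (7) P is a two-sided group-like projection; (8) Δ(P)(1 ⊗ P) = Δ(P)(P ⊗ 1). -/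
open scoped TensorProduct

noncomputable section

variable (k : Type*) [Field k] {A : Type*} [Ring A] [HopfAlgebra k A]

/-- `P` is a right group-like projection: a nonzero idempotent with
`Δ(P)(1 ⊗ P) = P ⊗ P = (1 ⊗ P)Δ(P)`. -/
def IsRightGroupLikeProjection (P : A) : Prop :=
  P ≠ 0 ∧ P * P = P ∧
    Coalgebra.comul (R := k) P * ((1 : A) ⊗ₜ[k] P) = P ⊗ₜ[k] P ∧
    ((1 : A) ⊗ₜ[k] P) * Coalgebra.comul (R := k) P = P ⊗ₜ[k] P

/-- `P` is a left group-like projection: a nonzero idempotent with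
`Δ(P)(P ⊗ 1) = P ⊗ P = (P ⊗ 1)Δ(P)`. -/
def IsLeftGroupLikeProjection (P : A) : Prop :=
  P ≠ 0 ∧ P * P = P ∧
    Coalgebra.comul (R := k) P * (P ⊗ₜ[k] (1 : A)) = P ⊗ₜ[k] P ∧
    (P ⊗ₜ[k] (1 : A)) * Coalgebra.comul (R := k) P = P ⊗ₜ[k] P

/-- A two-sided group-like projection. -/
def IsTwoSidedGroupLikeProjection (P : A) : Prop :=
  IsRightGroupLikeProjection k P ∧ IsLeftGroupLikeProjection k P

/-- `N_P^l = {x : (1 ⊗ P)Δ(x) = x ⊗ P}`. -/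
def NPlSet (P : A) : Set A :=
  {x : A | ((1 : A) ⊗ₜ[k] P) * Coalgebra.comul (R := k) x = x ⊗ₜ[k] P}

/-- `N_P^r = {x : Δ(x)(1 ⊗ P) = x ⊗ P}`. -/
def NPrSet (P : A) : Set A :=
  {x : A | Coalgebra.comul (R := k) x * ((1 : A) ⊗ₜ[k] P) = x ⊗ₜ[k] P}

/-- `N_P = N_P^l ∩ N_P^r`. -/
def NPSet (P : A) : Set A := NPlSet k P ∩ NPrSet k P

/-- `V_P = {(μ ⊗ id)(Δ(P)) : μ ∈ A*}`, the smallest left coideal containing `P`. -/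
def VPSet (P : A) : Set A :=
  {x : A | ∃ μ : A →ₗ[k] k,
    x = TensorProduct.lid k A ((TensorProduct.map μ LinearMap.id) (Coalgebra.comul (R := k) P))}

/-- A submodule `N ⊆ A` is a left coideal if `Δ(N) ⊆ A ⊗ N`. -/
def IsLeftCoideal (N : Submodule k A) : Prop :=
  ∀ x ∈ N, Coalgebra.comul (R := k) x ∈
    LinearMap.range (TensorProduct.map (LinearMap.id : A →ₗ[k] A) N.subtype)

/-- A subalgebra `N ⊆ A` is a left coideal subalgebra if `Δ(N) ⊆ A ⊗ N`. -/
def IsLeftCoidealSubalgebra (N : Subalgebra k A) : Prop :=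
  IsLeftCoideal k (Subalgebra.toSubmodule N)

/-!
The map `x ⊗ y ↦ S y ⊗ S x` reverses products and, since `S` is anti-comultiplicative, sends `Δ a`
to `Δ (S a)`; it therefore turns right group-like projections into left ones and conversely.
Applying `x ⊗ y ↦ S x * y` and `x ⊗ y ↦ x * S y` to the two defining equations of a right group-like
projection gives `S P * P = P` and `P * S P = S P`, and the mirror identities for a left one. Hence
`S² P = P`, or commutation of `P` with `S P`, already forces `S P = P`, and so does being two-sided.

The equation `Δ P * (1 ⊗ P) = Δ P * (P ⊗ 1)` yields `S P = P` in the same way, and then, by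
reversal, `(P ⊗ 1) * Δ P = (1 ⊗ P) * Δ P`. Applying `x ⊗ y ↦ Δ x * (1 ⊗ S y)`, which sends `Δ P` to
`P ⊗ 1`, to the latter turns the left side into `Δ P * (P ⊗ 1)` and the right side into `P ⊗ P`.
-/

section Bialgebra

open Coalgebra Bialgebra WithConv
open Algebra.TensorProduct (includeLeft includeRight)

lemma includeLeft_convMul_includeRight {R C : Type*} [CommSemiring R] [Semiring C] [Algebra R C]
    [Coalgebra R C] :
    toConv (includeLeft : C →ₐ[R] C ⊗[R] C).toLinearMap *
      toConv (includeRight : C →ₐ[R] C ⊗[R] C).toLinearMap = toConv comul := by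
  ext c
  rw [(ℛ R c).convMul_apply]
  simp [(ℛ R c).eq]

variable (R H : Type*) [CommSemiring R] [Semiring H] [Bialgebra R H]

/-- The algebra homomorphism `ε ⊗ id : H ⊗ H → H`, a left inverse of `Δ`. -/
def counitTensorId : H ⊗[R] H →ₐ[R] H :=
  (Algebra.TensorProduct.lid R H).toAlgHom.comp
    (Algebra.TensorProduct.map (counitAlgHom R H) (AlgHom.id R H))

/-- The algebra homomorphism `id ⊗ ε : H ⊗ H → H`, a left inverse of `Δ`. -/
def idTensorCounit : H ⊗[R] H →ₐ[R] H :=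
  (Algebra.TensorProduct.rid R R H).toAlgHom.comp
    (Algebra.TensorProduct.map (AlgHom.id R H) (counitAlgHom R H))

variable {R H}

@[simp]
lemma counitTensorId_tmul (x y : H) : counitTensorId R H (x ⊗ₜ y) = counit (R := R) x • y := rfl

@[simp]
lemma idTensorCounit_tmul (x y : H) : idTensorCounit R H (x ⊗ₜ y) = counit (R := R) y • x := rfl

@[simp]
lemma counitTensorId_comul (a : H) : counitTensorId R H (comul a) = a :=
  congr(TensorProduct.lid R H $(rTensor_counit_comul a)).trans (one_smul R a)

@[simp]
lemma idTensorCounit_comul (a : H) : idTensorCounit R H (comul a) = a :=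
  congr(TensorProduct.rid R H $(lTensor_counit_comul a)).trans (one_smul R a)

end Bialgebra

section HopfAlgebra

open Coalgebra HopfAlgebra LinearMap WithConv
open Algebra.TensorProduct (includeLeft includeRight)

variable {R H B : Type*} [CommSemiring R] [Semiring H] [HopfAlgebra R H] [Semiring B] [Algebra R B]

lemma algHom_comp_antipode_convMul_algHom (f : H →ₐ[R] B) :
    toConv (f.toLinearMap ∘ₗ antipode R) * toConv f.toLinearMap = 1 := by
  have h := algHom_comp_convMul_distrib f (toConv (antipode R)) (toConv LinearMap.id)
  rw [antipode_mul_id] at h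
  ext a
  simpa using congr($h.symm a)

lemma algHom_convMul_algHom_comp_antipode (f : H →ₐ[R] B) :
    toConv f.toLinearMap * toConv (f.toLinearMap ∘ₗ antipode R) = 1 := by
  have h := algHom_comp_convMul_distrib f (toConv LinearMap.id) (toConv (antipode R))
  rw [id_mul_antipode] at h
  ext a
  simpa using congr($h.symm a)

/-- The linear map `x ⊗ y ↦ f (S x) * g y`. On `Δ a` it is the convolution product of `f ∘ S`
and `g` at `a`, which is `ε a` when `f = g`. -/
def antipodeMul (f g : H →ₐ[R] B) : H ⊗[R] H →ₗ[R] B :=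
  mul' R B ∘ₗ TensorProduct.map (f.toLinearMap ∘ₗ antipode R) g.toLinearMap

/-- The linear map `x ⊗ y ↦ f x * g (S y)`. On `Δ a` it is the convolution product of `f`
and `g ∘ S` at `a`, which is `ε a` when `f = g`. -/
def mulAntipode (f g : H →ₐ[R] B) : H ⊗[R] H →ₗ[R] B :=
  mul' R B ∘ₗ TensorProduct.map f.toLinearMap (g.toLinearMap ∘ₗ antipode R)

@[simp]
lemma antipodeMul_tmul (f g : H →ₐ[R] B) (x y : H) :
    antipodeMul f g (x ⊗ₜ y) = f (antipode R x) * g y := rfl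

@[simp]
lemma mulAntipode_tmul (f g : H →ₐ[R] B) (x y : H) :
    mulAntipode f g (x ⊗ₜ y) = f x * g (antipode R y) := rfl

lemma antipodeMul_mul_one_tmul (f g : H →ₐ[R] B) (t : H ⊗[R] H) (p : H) :
    antipodeMul f g (t * (1 ⊗ₜ p)) = antipodeMul f g t * g p := by
  induction t with
  | zero => simp
  | add t₁ t₂ h₁ h₂ => simp only [add_mul, map_add, h₁, h₂]
  | tmul x y => simp [mul_assoc]

lemma antipodeMul_mul_tmul_one (f g : H →ₐ[R] B) (t : H ⊗[R] H) (p : H) :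
    antipodeMul f g (t * (p ⊗ₜ 1)) = f (antipode R p) * antipodeMul f g t := by
  induction t with
  | zero => simp
  | add t₁ t₂ h₁ h₂ => simp only [add_mul, mul_add, map_add, h₁, h₂]
  | tmul x y => simp [mul_assoc, antipode_mul_antidistrib]

lemma mulAntipode_tmul_one_mul (f g : H →ₐ[R] B) (p : H) (t : H ⊗[R] H) :
    mulAntipode f g ((p ⊗ₜ 1) * t) = f p * mulAntipode f g t := by
  induction t with
  | zero => simp
  | add t₁ t₂ h₁ h₂ => simp only [mul_add, map_add, h₁, h₂]
  | tmul x y => simp [mul_assoc]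

lemma mulAntipode_one_tmul_mul (f g : H →ₐ[R] B) (p : H) (t : H ⊗[R] H) :
    mulAntipode f g ((1 ⊗ₜ p) * t) = mulAntipode f g t * g (antipode R p) := by
  induction t with
  | zero => simp
  | add t₁ t₂ h₁ h₂ => simp only [add_mul, mul_add, map_add, h₁, h₂]
  | tmul x y => simp [mul_assoc, antipode_mul_antidistrib]

lemma antipodeMul_self_comul (f : H →ₐ[R] B) (a : H) :
    antipodeMul f f (comul a) = algebraMap R B (counit a) :=
  congr($(algHom_comp_antipode_convMul_algHom f) a)

lemma mulAntipode_self_comul (f : H →ₐ[R] B) (a : H) :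
    mulAntipode f f (comul a) = algebraMap R B (counit a) :=
  congr($(algHom_convMul_algHom_comp_antipode f) a)

lemma mulAntipode_comulAlgHom_includeRight_comul (a : H) :
    mulAntipode (Bialgebra.comulAlgHom R H) includeRight (comul a) = a ⊗ₜ[R] 1 := by
  have h : toConv (comul : H →ₗ[R] H ⊗[R] H) *
      toConv ((includeRight : H →ₐ[R] H ⊗[R] H).toLinearMap ∘ₗ antipode R) =
        toConv (includeLeft : H →ₐ[R] H ⊗[R] H).toLinearMap := by
    rw [← includeLeft_convMul_includeRight, mul_assoc, algHom_convMul_algHom_comp_antipode, mul_one]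
  exact congr($h a)

variable (R H) in
/-- The linear map `x ⊗ y ↦ S y ⊗ S x`, the antipode of `H ⊗ H` followed by the flip. It reverses
products and exchanges the left and right group-like projection equations. -/
def antipodeSwap : H ⊗[R] H →ₗ[R] H ⊗[R] H :=
  TensorProduct.map (antipode R) (antipode R) ∘ₗ (TensorProduct.comm R H H).toLinearMap

@[simp]
lemma antipodeSwap_tmul (x y : H) :
    antipodeSwap R H (x ⊗ₜ y) = antipode R y ⊗ₜ antipode R x := rfl

lemma antipodeSwap_mul (t u : H ⊗[R] H) :
    antipodeSwap R H (t * u) = antipodeSwap R H u * antipodeSwap R H t := by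
  have h : antipodeSwap R H ∘ₗ mul' R (H ⊗[R] H) ∘ₗ (TensorProduct.comm R _ _).toLinearMap =
      mul' R (H ⊗[R] H) ∘ₗ TensorProduct.map (antipodeSwap R H) (antipodeSwap R H) := by
    ext
    simp [antipode_mul_antidistrib]
  exact congr($h (u ⊗ₜ t))

lemma antipodeSwap_comul (a : H) : antipodeSwap R H (comul a) = comul (antipode R a) := by
  have swap_eq_convMul : toConv (antipodeSwap R H ∘ₗ comul) =
      toConv ((includeRight : H →ₐ[R] H ⊗[R] H).toLinearMap ∘ₗ antipode R) *
        toConv ((includeLeft : H →ₐ[R] H ⊗[R] H).toLinearMap ∘ₗ antipode R) := by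
    ext a
    rw [(ℛ R a).convMul_apply]
    simp [← (ℛ R a).eq]
  have left_inv : toConv (antipodeSwap R H ∘ₗ comul) * toConv comul = 1 := by
    rw [swap_eq_convMul, ← includeLeft_convMul_includeRight, mul_assoc,
      ← mul_assoc (toConv (_ ∘ₗ antipode R)) (toConv includeLeft.toLinearMap),
      algHom_comp_antipode_convMul_algHom, one_mul, algHom_comp_antipode_convMul_algHom]
  exact congr($(left_inv_eq_right_inv left_inv comul_right_inv) a)

lemma antipode_eq_self_of_comul_mul_eq {p : H} (hε : counit (R := R) p = 1)
    (h : comul (R := R) p * (1 ⊗ₜ[R] p) = comul (R := R) p * (p ⊗ₜ[R] 1)) :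
    antipode R p = p := by
  have := congr(antipodeMul (AlgHom.id R H) (AlgHom.id R H) $h)
  simpa [antipodeMul_mul_one_tmul, antipodeMul_mul_tmul_one, antipodeMul_self_comul, hε,
    eq_comm] using this

lemma tmul_one_mul_comul_eq_of_comul_mul_eq {p : H} (hS : antipode R p = p)
    (h : comul (R := R) p * (1 ⊗ₜ[R] p) = comul (R := R) p * (p ⊗ₜ[R] 1)) :
    (p ⊗ₜ[R] 1) * comul (R := R) p = (1 ⊗ₜ[R] p) * comul (R := R) p := by
  simpa [antipodeSwap_mul, antipodeSwap_comul, hS] using congr(antipodeSwap R H $h)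

lemma comul_mul_tmul_one_eq_tmul_self {p : H} (hS : antipode R p = p)
    (h : (p ⊗ₜ[R] 1) * comul (R := R) p = (1 ⊗ₜ[R] p) * comul (R := R) p) :
    comul (R := R) p * (p ⊗ₜ[R] 1) = p ⊗ₜ[R] p := by
  have := congr(mulAntipode (Bialgebra.comulAlgHom R H) includeRight $h)
  simpa [mulAntipode_tmul_one_mul, mulAntipode_one_tmul_mul,
    mulAntipode_comulAlgHom_includeRight_comul, hS] using this

end HopfAlgebra

section GroupLikeProjection

open Coalgebra HopfAlgebra

variable {k} {P : A}

lemma counit_eq_one_of_mul_self_eq_counit_smul (hP0 : P ≠ 0) (hP2 : P * P = P)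
    (h : P * P = counit (R := k) P • P) : counit (R := k) P = 1 :=
  (smul_left_inj hP0).1 (by rw [← h, hP2, one_smul])

namespace IsRightGroupLikeProjection

lemma counit_eq_one (h : IsRightGroupLikeProjection k P) : counit (R := k) P = 1 := by
  obtain ⟨hP0, hP2, hΔ, -⟩ := h
  exact counit_eq_one_of_mul_self_eq_counit_smul hP0 hP2 <| by
    simpa using congr(counitTensorId k A $hΔ)

lemma antipode_mul_self (h : IsRightGroupLikeProjection k P) : antipode k P * P = P := by
  have := congr(antipodeMul (AlgHom.id k A) (AlgHom.id k A) $(h.2.2.1))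
  simpa [antipodeMul_mul_one_tmul, antipodeMul_self_comul, h.counit_eq_one, eq_comm] using this

lemma self_mul_antipode (h : IsRightGroupLikeProjection k P) :
    P * antipode k P = antipode k P := by
  have := congr(mulAntipode (AlgHom.id k A) (AlgHom.id k A) $(h.2.2.2))
  simpa [mulAntipode_one_tmul_mul, mulAntipode_self_comul, h.counit_eq_one, eq_comm] using this

lemma antipode_antipode_eq_self_iff (h : IsRightGroupLikeProjection k P) :
    antipode k (antipode k P) = P ↔ antipode k P = P := by
  refine ⟨fun hS ↦ ?_, fun hS ↦ by rw [hS, hS]⟩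
  calc antipode k P = antipode k (antipode k P * P) := by rw [h.antipode_mul_self]
    _ = antipode k P * antipode k (antipode k P) := antipode_mul_antidistrib _ _
    _ = P := by rw [hS, h.antipode_mul_self]

lemma mul_antipode_comm_iff (h : IsRightGroupLikeProjection k P) :
    P * antipode k P = antipode k P * P ↔ antipode k P = P := by
  rw [h.self_mul_antipode, h.antipode_mul_self]

lemma isLeftGroupLikeProjection_antipode (h : IsRightGroupLikeProjection k P) :
    IsLeftGroupLikeProjection k (antipode k P) := by
  have hSP0 : antipode k P ≠ 0 := fun h0 ↦
    h.1 (by rw [← h.antipode_mul_self, h0, zero_mul])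
  obtain ⟨-, hP2, hr, hl⟩ := h
  refine ⟨hSP0, by rw [← antipode_mul_antidistrib, hP2], ?_, ?_⟩
  · simpa [antipodeSwap_mul, antipodeSwap_comul] using congr(antipodeSwap k A $hl)
  · simpa [antipodeSwap_mul, antipodeSwap_comul] using congr(antipodeSwap k A $hr)

end IsRightGroupLikeProjection

namespace IsLeftGroupLikeProjection

lemma counit_eq_one (h : IsLeftGroupLikeProjection k P) : counit (R := k) P = 1 := by
  obtain ⟨hP0, hP2, hΔ, -⟩ := h
  exact counit_eq_one_of_mul_self_eq_counit_smul hP0 hP2 <| by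
    simpa using congr(idTensorCounit k A $hΔ)

lemma antipode_mul_self (h : IsLeftGroupLikeProjection k P) :
    antipode k P * P = antipode k P := by
  have := congr(antipodeMul (AlgHom.id k A) (AlgHom.id k A) $(h.2.2.1))
  simpa [antipodeMul_mul_tmul_one, antipodeMul_self_comul, h.counit_eq_one, eq_comm] using this

lemma self_mul_antipode (h : IsLeftGroupLikeProjection k P) : P * antipode k P = P := by
  have := congr(mulAntipode (AlgHom.id k A) (AlgHom.id k A) $(h.2.2.2))
  simpa [mulAntipode_tmul_one_mul, mulAntipode_self_comul, h.counit_eq_one, eq_comm] using this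

lemma antipode_antipode_eq_self_iff (h : IsLeftGroupLikeProjection k P) :
    antipode k (antipode k P) = P ↔ antipode k P = P := by
  refine ⟨fun hS ↦ ?_, fun hS ↦ by rw [hS, hS]⟩
  calc antipode k P = antipode k (P * antipode k P) := by rw [h.self_mul_antipode]
    _ = antipode k (antipode k P) * antipode k P := antipode_mul_antidistrib _ _
    _ = P := by rw [hS, h.self_mul_antipode]

lemma mul_antipode_comm_iff (h : IsLeftGroupLikeProjection k P) :
    P * antipode k P = antipode k P * P ↔ antipode k P = P := by
  rw [h.self_mul_antipode, h.antipode_mul_self, eq_comm]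

lemma isRightGroupLikeProjection_antipode (h : IsLeftGroupLikeProjection k P) :
    IsRightGroupLikeProjection k (antipode k P) := by
  have hSP0 : antipode k P ≠ 0 := fun h0 ↦
    h.1 (by rw [← h.self_mul_antipode, h0, mul_zero])
  obtain ⟨-, hP2, hr, hl⟩ := h
  refine ⟨hSP0, by rw [← antipode_mul_antidistrib, hP2], ?_, ?_⟩
  · simpa [antipodeSwap_mul, antipodeSwap_comul] using congr(antipodeSwap k A $hl)
  · simpa [antipodeSwap_mul, antipodeSwap_comul] using congr(antipodeSwap k A $hr)

end IsLeftGroupLikeProjection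

lemma IsTwoSidedGroupLikeProjection.antipode_eq_self (h : IsTwoSidedGroupLikeProjection k P) :
    antipode k P = P :=
  h.1.self_mul_antipode.symm.trans h.2.self_mul_antipode

lemma isTwoSidedGroupLikeProjection_iff_isRight_and_antipode_eq_self :
    IsTwoSidedGroupLikeProjection k P ↔ IsRightGroupLikeProjection k P ∧ antipode k P = P :=
  ⟨fun h ↦ ⟨h.1, h.antipode_eq_self⟩, fun ⟨h, hS⟩ ↦ ⟨h, hS ▸ h.isLeftGroupLikeProjection_antipode⟩⟩

lemma isTwoSidedGroupLikeProjection_iff_isLeft_and_antipode_eq_self :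
    IsTwoSidedGroupLikeProjection k P ↔ IsLeftGroupLikeProjection k P ∧ antipode k P = P :=
  ⟨fun h ↦ ⟨h.2, h.antipode_eq_self⟩, fun ⟨h, hS⟩ ↦ ⟨hS ▸ h.isRightGroupLikeProjection_antipode, h⟩⟩

lemma isTwoSidedGroupLikeProjection_of_comul_mul_eq (hP0 : P ≠ 0) (hP2 : P * P = P)
    (h : comul (R := k) P * (1 ⊗ₜ[k] P) = comul (R := k) P * (P ⊗ₜ[k] 1)) :
    IsTwoSidedGroupLikeProjection k P := by
  have hε : counit (R := k) P = 1 := counit_eq_one_of_mul_self_eq_counit_smul hP0 hP2 <| by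
    simpa using congr(counitTensorId k A $h)
  have hS : antipode k P = P := antipode_eq_self_of_comul_mul_eq hε h
  have h' := tmul_one_mul_comul_eq_of_comul_mul_eq hS h
  have hr : comul (R := k) P * (P ⊗ₜ[k] 1) = P ⊗ₜ[k] P := comul_mul_tmul_one_eq_tmul_self hS h'
  have hl : (1 ⊗ₜ[k] P) * comul (R := k) P = P ⊗ₜ[k] P := by
    simpa [antipodeSwap_mul, antipodeSwap_comul, hS] using congr(antipodeSwap k A $hr)
  exact ⟨⟨hP0, hP2, h.trans hr, hl⟩, ⟨hP0, hP2, hr, h'.trans hl⟩⟩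

lemma isTwoSidedGroupLikeProjection_iff_comul_mul_eq (hP0 : P ≠ 0) (hP2 : P * P = P) :
    IsTwoSidedGroupLikeProjection k P ↔
      comul (R := k) P * (1 ⊗ₜ[k] P) = comul (R := k) P * (P ⊗ₜ[k] 1) :=
  ⟨fun ⟨⟨_, _, hr, _⟩, ⟨_, _, hl, _⟩⟩ ↦ hr.trans hl.symm,
    isTwoSidedGroupLikeProjection_of_comul_mul_eq hP0 hP2⟩

end GroupLikeProjection

theorem statement0_general (P : A) (hP0 : P ≠ 0) (hP2 : P * P = P) :
    List.TFAE [
      IsRightGroupLikeProjection k P ∧ HopfAlgebra.antipode (R := k) P = P,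
      IsRightGroupLikeProjection k P ∧
        HopfAlgebra.antipode (R := k) (HopfAlgebra.antipode (R := k) P) = P,
      IsRightGroupLikeProjection k P ∧
        P * HopfAlgebra.antipode (R := k) P = HopfAlgebra.antipode (R := k) P * P,
      IsLeftGroupLikeProjection k P ∧ HopfAlgebra.antipode (R := k) P = P,
      IsLeftGroupLikeProjection k P ∧
        HopfAlgebra.antipode (R := k) (HopfAlgebra.antipode (R := k) P) = P,
      IsLeftGroupLikeProjection k P ∧
        P * HopfAlgebra.antipode (R := k) P = HopfAlgebra.antipode (R := k) P * P,
      IsTwoSidedGroupLikeProjection k P,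
      Coalgebra.comul (R := k) P * ((1 : A) ⊗ₜ[k] P) =
        Coalgebra.comul (R := k) P * (P ⊗ₜ[k] (1 : A))] := by
  tfae_have 1 ↔ 2 := and_congr_right fun h ↦ h.antipode_antipode_eq_self_iff.symm
  tfae_have 1 ↔ 3 := and_congr_right fun h ↦ h.mul_antipode_comm_iff.symm
  tfae_have 4 ↔ 5 := and_congr_right fun h ↦ h.antipode_antipode_eq_self_iff.symm
  tfae_have 4 ↔ 6 := and_congr_right fun h ↦ h.mul_antipode_comm_iff.symm
  tfae_have 7 ↔ 1 := isTwoSidedGroupLikeProjection_iff_isRight_and_antipode_eq_self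
  tfae_have 7 ↔ 4 := isTwoSidedGroupLikeProjection_iff_isLeft_and_antipode_eq_self
  tfae_have 7 ↔ 8 := isTwoSidedGroupLikeProjection_iff_comul_mul_eq hP0 hP2
  tfae_finish

/-- Theorem (equivalent conditions for a nonzero idempotent in a Hopf algebra with
bijective antipode to be a two-sided group-like projection). -/
theorem statement0
    (hS : Function.Bijective (HopfAlgebra.antipode (R := k) : A →ₗ[k] A))
    (P : A) (hP0 : P ≠ 0) (hP2 : P * P = P) :
    List.TFAE [
      IsRightGroupLikeProjection k P ∧ HopfAlgebra.antipode (R := k) P = P,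
      IsRightGroupLikeProjection k P ∧
        HopfAlgebra.antipode (R := k) (HopfAlgebra.antipode (R := k) P) = P,
      IsRightGroupLikeProjection k P ∧
        P * HopfAlgebra.antipode (R := k) P = HopfAlgebra.antipode (R := k) P * P,
      IsLeftGroupLikeProjection k P ∧ HopfAlgebra.antipode (R := k) P = P,
      IsLeftGroupLikeProjection k P ∧
        HopfAlgebra.antipode (R := k) (HopfAlgebra.antipode (R := k) P) = P,
      IsLeftGroupLikeProjection k P ∧
        P * HopfAlgebra.antipode (R := k) P = HopfAlgebra.antipode (R := k) P * P,
      IsTwoSidedGroupLikeProjection k P,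
      Coalgebra.comul (R := k) P * ((1 : A) ⊗ₜ[k] P) =
        Coalgebra.comul (R := k) P * (P ⊗ₜ[k] (1 : A))] :=
  statement0_general k P hP0 hP2
end
end

section
/- Let A be a semisimple Hopf algebra over a field k with bijective antipode. The maps N ↦ P_N, where P_N is the unique central idempotent of N with ker(ε|_N) = (1 − P_N)N, and P ↦ N_P are mutually inverse bijections between the set of left coideal subalgebras of A and the set of right group-like projections in A. -/
open scoped TensorProduct

noncomputable section

variable (k : Type*) [Field k] {A : Type*} [Ring A] [HopfAlgebra k A]

/-!
The projection `P_N` is the two-sided integral of `N` of counit one, and every right group-like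
projection `P` is this integral of `N_P`. So one has to produce integrals in a left coideal
subalgebra `N`, and to show `N_P = N` for the integral `P` of `N`.

Both rest on `A` being a projective generator over `N`. Among the finite-dimensional `N`-modules
`V ≠ 0` consider those maximizing `dim Hom_N(A, V) / dim V`. The maximum is inherited by submodules
and quotients and by finite powers, and `A` is projective relative to modules attaining it. If `V`
attains it then so does `A ⊗ V` with the diagonal action, because `A ⊗ Hom_N(A, V)` embeds into
`Hom_N(A, A ⊗ V)`; and `N` embeds into a power of `A ⊗ V`. Hence `N` attains the maximum, so every
finite-dimensional `N`-module does.

Since `A` is semisimple it has an integral `e` of counit one, and `f ↦ (f ⊗ id)(Δ(e))` is a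
bijection from `A*` to `A`; in particular `A` is finite-dimensional. By projectivity the counit of
`A` factors through that of `N` by an `N`-linear map `A → N`, which sends `e` to a left integral `P`
of `N`. It is two-sided: `S(P) P = P` gives `P A ⊆ S(P) A`, and the bijection `A* ≃ A` shows that
both have the same dimension, so `P S(P) = S(P)`, and `S⁻¹` turns this into right invariance.

Finally, `V_P` is contained in `N`, is a right ideal of `N_P`, and satisfies `V_P A = A`. As `A` is
a generator over `N_P`, already `V_P N_P` contains `1`, so `N_P ⊆ V_P ⊆ N`.
-/

universe u v

section Sweedler

open Coalgebra HopfAlgebra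
variable {k : Type v} [Field k] {A : Type u} [Ring A] [HopfAlgebra k A]

theorem rTensor_assoc_symm_lTensor_comul {g : A ⊗[k] A →ₗ[k] A}
    (hg : ∀ a, g (comul a) = algebraMap k A (counit a)) (x : A) :
    g.rTensor A ((TensorProduct.assoc k A A A).symm (comul.lTensor A (comul (R := k) x))) =
      1 ⊗ₜ x := by
  have : g ∘ₗ comul = Algebra.linearMap k A ∘ₗ counit := LinearMap.ext hg
  rw [coassoc_symm_apply, ← LinearMap.comp_apply, ← LinearMap.rTensor_comp, this,
    LinearMap.rTensor_comp, LinearMap.comp_apply, rTensor_counit_comul]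
  simp

theorem lTensor_assoc_rTensor_comul {g : A ⊗[k] A →ₗ[k] A}
    (hg : ∀ a, g (comul a) = algebraMap k A (counit a)) (x : A) :
    g.lTensor A (TensorProduct.assoc k A A A (comul.rTensor A (comul (R := k) x))) =
      x ⊗ₜ 1 := by
  have : g ∘ₗ comul = Algebra.linearMap k A ∘ₗ counit := LinearMap.ext hg
  rw [coassoc_apply, ← LinearMap.comp_apply, ← LinearMap.lTensor_comp, this,
    LinearMap.lTensor_comp, LinearMap.comp_apply, lTensor_counit_comul]
  simp

theorem sum_antipode_tmul_one_mul_comul {ι : Type*} {s : Finset ι} {a c : ι → A} {x : A}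
    (h : comul (R := k) x = ∑ i ∈ s, a i ⊗ₜ[k] c i) :
    ∑ i ∈ s, (antipode k (a i) ⊗ₜ[k] 1) * comul (c i) = 1 ⊗ₜ[k] x := by
  rw [← rTensor_assoc_symm_lTensor_comul (g := LinearMap.mul' k A ∘ₗ (antipode k).rTensor A)
    (mul_antipode_rTensor_comul_apply (R := k)) x, h]
  simp only [map_sum, LinearMap.lTensor_tmul]
  refine Finset.sum_congr rfl fun i _ => ?_
  induction comul (R := k) (c i) with
  | zero => simp
  | tmul x y => simp
  | add x y hx hy => simp only [mul_add, hx, hy, TensorProduct.tmul_add, map_add]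

variable (k A) in
/-- The inverse of a bijective antipode. -/
def antipodeInv (hS : Function.Bijective (antipode k : A →ₗ[k] A)) : A →ₗ[k] A :=
  (LinearEquiv.ofBijective (antipode k) hS).symm.toLinearMap

variable (hS : Function.Bijective (antipode k : A →ₗ[k] A))

theorem antipode_antipodeInv (a : A) : antipode k (antipodeInv k A hS a) = a :=
  (LinearEquiv.ofBijective (antipode k) hS).apply_symm_apply a

/-- The linear map `a ⊗ b ↦ b S⁻¹(a)`. -/
def flipMulAntipodeInv : A ⊗[k] A →ₗ[k] A :=
  TensorProduct.lift ((LinearMap.mul k A).flip ∘ₗ antipodeInv k A hS)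

@[simp]
theorem flipMulAntipodeInv_tmul (a b : A) :
    flipMulAntipodeInv hS (a ⊗ₜ b) = b * antipodeInv k A hS a := rfl

theorem flipMulAntipodeInv_comul (a : A) :
    flipMulAntipodeInv hS (comul a) = algebraMap k A (counit a) := by
  apply hS.1
  have h : ∀ z : A ⊗[k] A, antipode k (flipMulAntipodeInv hS z) =
      LinearMap.mul' k A ((antipode k).lTensor A z) := fun z => by
    induction z with
    | zero => simp
    | tmul x y => simp [antipode_mul_antidistrib, antipode_antipodeInv]
    | add x y hx hy => simp only [hx, hy, map_add]
  rw [h, mul_antipode_lTensor_comul_apply, Algebra.algebraMap_eq_smul_one, map_smul, antipode_one]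

theorem sum_comul_mul_antipodeInv_tmul_one {ι : Type*} {s : Finset ι} {a c : ι → A} {x : A}
    (h : comul (R := k) x = ∑ i ∈ s, a i ⊗ₜ[k] c i) :
    ∑ i ∈ s, comul (c i) * (antipodeInv k A hS (a i) ⊗ₜ[k] 1) = 1 ⊗ₜ[k] x := by
  rw [← rTensor_assoc_symm_lTensor_comul (flipMulAntipodeInv_comul hS) x, h]
  simp only [map_sum, LinearMap.lTensor_tmul]
  refine Finset.sum_congr rfl fun i _ => ?_
  induction comul (R := k) (c i) with
  | zero => simp
  | tmul x y => simp
  | add x y hx hy => simp only [add_mul, hx, hy, TensorProduct.tmul_add, map_add]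

theorem sum_mul_antipodeInv {ι : Type*} {s : Finset ι} {a c : ι → A} {x : A}
    (h : comul (R := k) x = ∑ i ∈ s, a i ⊗ₜ[k] c i) :
    ∑ i ∈ s, c i * antipodeInv k A hS (a i) = algebraMap k A (counit x) := by
  rw [← flipMulAntipodeInv_comul hS, h]
  simp

theorem sum_antipodeInv_mul {ι : Type*} {s : Finset ι} {a c : ι → A} {x : A}
    (h : comul (R := k) x = ∑ i ∈ s, a i ⊗ₜ[k] c i) :
    ∑ i ∈ s, antipodeInv k A hS (c i) * a i = algebraMap k A (counit x) := by
  apply hS.1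
  have := mul_antipode_rTensor_comul_apply (R := k) x
  rw [h] at this
  simpa [antipode_mul_antidistrib, antipode_antipodeInv, Algebra.algebraMap_eq_smul_one] using this

theorem sum_counit_smul_left {ι : Type*} {s : Finset ι} {a c : ι → A} {x : A}
    (h : comul (R := k) x = ∑ i ∈ s, a i ⊗ₜ[k] c i) :
    ∑ i ∈ s, counit (R := k) (c i) • a i = x := by
  have := congr(TensorProduct.rid k A $(lTensor_counit_comul (R := k) x))
  rw [h] at this
  simpa using this

end Sweedler

section BasisTensor

variable {k : Type v} [Field k] {A M : Type*} [AddCommGroup A] [Module k A] [AddCommGroup M]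
  [Module k M] {ι : Type*} (b : Module.Basis ι k A)

theorem eq_zero_of_sum_basis_tmul_eq_zero {s : Finset ι} {m : ι → M}
    (h : ∑ i ∈ s, b i ⊗ₜ[k] m i = 0) {i : ι} (hi : i ∈ s) : m i = 0 := by
  classical
  have := congr(TensorProduct.lid k M ((b.coord i).rTensor M $h))
  simpa [Finsupp.single_apply, hi, ite_smul] using this

end BasisTensor

section HomRatio

variable {k : Type v} [Field k] {R : Type u} [Ring R] [Algebra k R]
  {M : Type*} [AddCommGroup M] [Module R M]
  {V W : Type u} [AddCommGroup V] [Module k V] [Module R V] [IsScalarTower k R V]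
  [AddCommGroup W] [Module k W] [Module R W] [IsScalarTower k R W]

variable (k R M) in
/-- The bound `dim Hom_R(M, V) / dim V ≤ a / b` for all finite-dimensional `R`-modules `V`, with the
denominators cleared. -/
def HomRatioLE (a b : ℕ) : Prop :=
  ∀ (V : Type u) [AddCommGroup V] [Module k V] [Module R V] [IsScalarTower k R V]
    [Module.Finite k V], b * Module.finrank k (M →ₗ[R] V) ≤ a * Module.finrank k V

variable (k R M V) in
/-- The module `V` satisfies `dim Hom_R(M, V) / dim V = a / b`, with the denominators cleared; it is
used for modules attaining the bound of `HomRatioLE`. -/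
def HomRatioEq (a b : ℕ) : Prop :=
  b * Module.finrank k (M →ₗ[R] V) = a * Module.finrank k V

theorem finrank_linearMap_congr_right (e : V ≃ₗ[R] W) :
    Module.finrank k (M →ₗ[R] V) = Module.finrank k (M →ₗ[R] W) :=
  (LinearEquiv.ofLinearMap (e.toLinearMap.compRight k : (M →ₗ[R] V) →ₗ[k] M →ₗ[R] W)
    (e.symm.toLinearMap.compRight k) (by ext; simp) (by ext; simp)).finrank_eq

theorem HomRatioEq.congr {a b : ℕ} (h : HomRatioEq k R M V a b) (e : V ≃ₗ[R] W) :
    HomRatioEq k R M W a b := by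
  rwa [HomRatioEq, ← finrank_linearMap_congr_right e, ← (e.restrictScalars k).finrank_eq]

theorem HomRatioEq.pi [Module.Finite k (M →ₗ[R] V)] [Module.Finite k V] {a b : ℕ}
    (h : HomRatioEq k R M V a b) (n : ℕ) : HomRatioEq k R M (Fin n → V) a b := by
  have hpi : Module.finrank k (M →ₗ[R] (Fin n → V)) = n * Module.finrank k (M →ₗ[R] V) := by
    rw [← (LinearEquiv.linearMapPi k : (Fin n → M →ₗ[R] V) ≃ₗ[k] _).finrank_eq]
    simp [Module.finrank_pi_fintype]
  rw [HomRatioEq, hpi, Module.finrank_pi_fintype, Finset.sum_const, Finset.card_fin, smul_eq_mul,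
    mul_left_comm, h, mul_left_comm]

theorem HomRatioEq.exists_linearMap_ne_zero [Module.Finite k V] [Nontrivial V] {a b : ℕ}
    (h : HomRatioEq k R M V a b) (ha : a ≠ 0) : ∃ f : M →ₗ[R] V, f ≠ 0 := by
  have := Nat.mul_pos ha.bot_lt (Module.finrank_pos (R := k) (M := V))
  have := Module.nontrivial_of_finrank_pos (Nat.pos_of_mul_pos_left (h ▸ this))
  exact exists_ne 0

variable [Module k M] [IsScalarTower k R M]

theorem finrank_linearMap_le [Module.Finite k M] [Module.Finite k V] :
    Module.finrank k (M →ₗ[R] V) ≤ Module.finrank k M * Module.finrank k V :=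
  (LinearMap.finrank_le_finrank_of_injective (f := LinearMap.restrictScalarsₗ k R M V k)
    (LinearMap.restrictScalars_injective k)).trans_eq (Module.finrank_linearMap k k M V)

theorem finite_submodule_of_isScalarTower [Module.Finite k V] (T : Submodule R V) :
    Module.Finite k T :=
  Module.Finite.of_injective (T.subtype.restrictScalars k) T.injective_subtype

theorem finrank_quotient_add_finrank_of_isScalarTower [Module.Finite k V] (T : Submodule R V) :
    Module.finrank k (V ⧸ T) + Module.finrank k T = Module.finrank k V :=
  (T.restrictScalars k).finrank_quotient_add_finrank

theorem finrank_linearMap_eq_add_finrank_range [Module.Finite k M] [Module.Finite k V]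
    (T : Submodule R V) :
    Module.finrank k (M →ₗ[R] V) = Module.finrank k (LinearMap.range
      (T.mkQ.compRight k : (M →ₗ[R] V) →ₗ[k] M →ₗ[R] V ⧸ T)) + Module.finrank k (M →ₗ[R] T) := by
  have hker : LinearMap.ker (T.mkQ.compRight k : (M →ₗ[R] V) →ₗ[k] M →ₗ[R] V ⧸ T) =
      LinearMap.range (T.subtype.compRight k : (M →ₗ[R] T) →ₗ[k] M →ₗ[R] V) := by
    ext f
    refine ⟨fun hf => ⟨f.codRestrict T fun x => ?_, rfl⟩, ?_⟩
    · simpa using LinearMap.congr_fun hf x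
    · rintro ⟨g, rfl⟩
      ext x
      simp
  have hinj : Function.Injective (T.subtype.compRight k : (M →ₗ[R] T) →ₗ[k] M →ₗ[R] V) :=
    fun f g h => LinearMap.ext fun x => Subtype.ext (LinearMap.congr_fun h x)
  rw [← LinearMap.finrank_range_of_inj hinj, ← hker, LinearMap.finrank_range_add_finrank_ker]

section Extension

variable [Module.Finite k M] [Module.Finite k V] {a b : ℕ}

theorem finrank_hom_mul_le_of_submodule (T : Submodule R V)
    (hT : b * Module.finrank k (M →ₗ[R] T) ≤ a * Module.finrank k T)
    (hQ : b * Module.finrank k (M →ₗ[R] V ⧸ T) ≤ a * Module.finrank k (V ⧸ T)) :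
    b * Module.finrank k (M →ₗ[R] V) ≤ a * Module.finrank k V := by
  rw [← finrank_quotient_add_finrank_of_isScalarTower T, finrank_linearMap_eq_add_finrank_range T,
    mul_add, mul_add]
  exact add_le_add ((Nat.mul_le_mul_left b (Submodule.finrank_le _)).trans hQ) hT

theorem HomRatioEq.of_submodule (hle : HomRatioLE k R M a b) (h : HomRatioEq k R M V a b)
    (T : Submodule R V) :
    HomRatioEq k R M T a b ∧ HomRatioEq k R M (V ⧸ T) a b ∧
      b * Module.finrank k (M →ₗ[R] V ⧸ T) = b * Module.finrank k (LinearMap.range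
        (T.mkQ.compRight k : (M →ₗ[R] V) →ₗ[k] M →ₗ[R] V ⧸ T)) := by
  have := finite_submodule_of_isScalarTower (k := k) T
  have hT := hle T
  have hQ := hle (V ⧸ T)
  have hrange := Nat.mul_le_mul_left b (LinearMap.range
    (T.mkQ.compRight k : (M →ₗ[R] V) →ₗ[k] M →ₗ[R] V ⧸ T)).finrank_le
  unfold HomRatioEq at h ⊢
  rw [← finrank_quotient_add_finrank_of_isScalarTower T, finrank_linearMap_eq_add_finrank_range T,
    mul_add, mul_add] at h
  omega

theorem HomRatioEq.of_injective (hle : HomRatioLE k R M a b)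
    (h : HomRatioEq k R M V a b) {f : W →ₗ[R] V} (hf : Function.Injective f) :
    HomRatioEq k R M W a b :=
  (h.of_submodule hle (LinearMap.range f)).1.congr (LinearEquiv.ofInjective f hf).symm

theorem HomRatioEq.of_surjective (hle : HomRatioLE k R M a b)
    (h : HomRatioEq k R M V a b) {f : V →ₗ[R] W} (hf : Function.Surjective f) :
    HomRatioEq k R M W a b :=
  (h.of_submodule hle (LinearMap.ker f)).2.1.congr (f.quotKerEquivOfSurjective hf)

theorem HomRatioEq.exists_comp_eq (hle : HomRatioLE k R M a b)
    (h : HomRatioEq k R M V a b) (hb : b ≠ 0) {U : Type*} [AddCommGroup U] [Module R U]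
    {f : V →ₗ[R] U} (hf : Function.Surjective f) (g : M →ₗ[R] U) :
    ∃ g' : M →ₗ[R] V, f ∘ₗ g' = g := by
  have hrange := (h.of_submodule hle (LinearMap.ker f)).2.2
  have htop := Submodule.eq_top_of_finrank_eq (Nat.eq_of_mul_eq_mul_left (by omega) hrange).symm
  let e := f.quotKerEquivOfSurjective hf
  obtain ⟨g', hg'⟩ := LinearMap.range_eq_top.1 htop (e.symm.toLinearMap ∘ₗ g)
  refine ⟨g', LinearMap.ext fun x => e.symm.injective ?_⟩
  have := LinearMap.congr_fun hg' x
  simpa [e, LinearEquiv.symm_apply_eq] using this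

theorem HomRatioLE.of_quotient_ideal
    (h : ∀ I : Submodule R R, b * Module.finrank k (M →ₗ[R] R ⧸ I) ≤ a * Module.finrank k (R ⧸ I)) :
    HomRatioLE k R M a b := by
  intro V _ _ _ _ _
  induction hn : Module.finrank k V using Nat.strong_induction_on generalizing V with
  | _ n ih =>
  rcases subsingleton_or_nontrivial V with _ | _
  · have : Subsingleton (M →ₗ[R] V) := ⟨fun f g => LinearMap.ext fun x => Subsingleton.elim _ _⟩
    simp [Module.finrank_zero_of_subsingleton]
  obtain ⟨v, hv⟩ := exists_ne (0 : V)
  let T := LinearMap.range (LinearMap.toSpanSingleton R V v)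
  have := finite_submodule_of_isScalarTower (k := k) T
  have : Nontrivial T := ⟨⟨v, 1, by simp⟩, 0, fun h0 => hv congr(($h0).1)⟩
  have hpos := Module.finrank_pos (R := k) (M := T)
  have hdim := finrank_quotient_add_finrank_of_isScalarTower (k := k) T
  subst hn
  refine finrank_hom_mul_le_of_submodule T ?_ (ih _ (by omega) _ rfl)
  let e := (LinearMap.toSpanSingleton R V v).quotKerEquivRange
  rw [← finrank_linearMap_congr_right e, ← (e.restrictScalars k).finrank_eq]
  exact h _

end Extension

theorem HomRatioLE.ne_zero {M : Type u} [AddCommGroup M] [Module k M] [Module R M]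
    [IsScalarTower k R M] [Module.Finite k M] [Nontrivial M] {a b : ℕ}
    (hle : HomRatioLE k R M a b) (hb : b ≠ 0) : a ≠ 0 := by
  rintro rfl
  have hpos : 0 < Module.finrank k (M →ₗ[R] M) :=
    Module.finrank_pos_iff_exists_ne_zero.2 ⟨_, one_ne_zero (α := Module.End R M)⟩
  have hmul := Nat.mul_pos hb.bot_lt hpos
  have hid := hle M
  omega

theorem exists_homRatioLE_and_homRatioEq [Module.Finite k R] [Nontrivial R] [Module.Finite k M] :
    ∃ I : Submodule R R, I ≠ ⊤ ∧ ∃ a b : ℕ,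
      b ≠ 0 ∧ HomRatioLE k R M a b ∧ HomRatioEq k R M (R ⧸ I) a b := by
  let homDim (I : Submodule R R) : ℕ := Module.finrank k (M →ₗ[R] R ⧸ I)
  let dim (I : Submodule R R) : ℕ := Module.finrank k (R ⧸ I)
  have hdim_le (I) : dim I ≤ Module.finrank k R :=
    (Nat.le_add_right _ _).trans_eq (finrank_quotient_add_finrank_of_isScalarTower I)
  have hdim_pos {I} (hI : I ≠ ⊤) : 0 < dim I :=
    have := Submodule.Quotient.nontrivial_iff.2 hI
    Module.finrank_pos
  have hfin : {p | ∃ I ≠ ⊤, (homDim I, dim I) = p}.Finite := by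
    refine ((Set.finite_Iic (Module.finrank k M * Module.finrank k R)).prod
      (Set.finite_Iic (Module.finrank k R))).subset ?_
    rintro _ ⟨I, -, rfl⟩
    exact ⟨finrank_linearMap_le.trans (Nat.mul_le_mul_left _ (hdim_le I)), hdim_le I⟩
  obtain ⟨_, ⟨I, hI, rfl⟩, hmax⟩ := Set.exists_max_image _ (fun p => (p.1 / p.2 : ℚ)) hfin
    ⟨_, ⊥, bot_ne_top, rfl⟩
  refine ⟨I, hI, homDim I, dim I, (hdim_pos hI).ne', .of_quotient_ideal fun J => ?_, mul_comm _ _⟩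
  by_cases hJ : J = ⊤
  · have : Subsingleton (R ⧸ J) := Submodule.Quotient.subsingleton_iff.2 hJ
    have : Subsingleton (M →ₗ[R] R ⧸ J) :=
      ⟨fun f g => LinearMap.ext fun x => Subsingleton.elim _ _⟩
    simp [Module.finrank_zero_of_subsingleton]
  · have h := hmax _ ⟨J, hJ, rfl⟩
    have hI0 : (0 : ℚ) < dim I := by exact_mod_cast hdim_pos hI
    have hJ0 : (0 : ℚ) < dim J := by exact_mod_cast hdim_pos hJ
    rw [div_le_div_iff₀ hJ0 hI0] at h
    rw [mul_comm]
    exact_mod_cast h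

section Attained

variable [Module.Finite k R] [Module.Finite k M] {a b : ℕ}

theorem HomRatioEq.of_regular (hle : HomRatioLE k R M a b) (h : HomRatioEq k R M R a b)
    [Module.Finite k V] : HomRatioEq k R M V a b := by
  have : Module.Finite R V := .of_restrictScalars_finite k R V
  obtain ⟨n, f, hf⟩ := Module.Finite.exists_fin' R V
  exact (h.pi n).of_surjective hle hf

theorem HomRatioEq.projective {M : Type u} [AddCommGroup M] [Module k M] [Module R M]
    [IsScalarTower k R M] [Module.Finite k M] (hle : HomRatioLE k R M a b)
    (h : HomRatioEq k R M R a b) (hb : b ≠ 0) : Module.Projective R M := by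
  have : Module.Finite R M := .of_restrictScalars_finite k R M
  obtain ⟨n, f, hf⟩ := Module.Finite.exists_fin' R M
  obtain ⟨s, hs⟩ := (h.pi n).exists_comp_eq hle hb hf LinearMap.id
  exact .of_split s f hs

theorem HomRatioEq.iSup_range_eq_top (hle : HomRatioLE k R M a b)
    (h : HomRatioEq k R M R a b) (ha : a ≠ 0) (hb : b ≠ 0) :
    ⨆ f : M →ₗ[R] R, LinearMap.range f = ⊤ := by
  set T := ⨆ f : M →ₗ[R] R, LinearMap.range f
  by_contra hne
  have := Submodule.Quotient.nontrivial_iff.2 hne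
  have hquot : HomRatioEq k R M (R ⧸ T) a b := h.of_regular hle
  obtain ⟨g, hg⟩ := hquot.exists_linearMap_ne_zero ha
  obtain ⟨g', rfl⟩ := h.exists_comp_eq hle hb T.mkQ_surjective g
  refine hg (LinearMap.ext fun x => (Submodule.Quotient.mk_eq_zero T).2 ?_)
  exact (le_iSup LinearMap.range g') ⟨x, rfl⟩

end Attained

end HomRatio

section Diagonal

open Coalgebra HopfAlgebra
variable {k : Type v} [Field k] {A : Type u} [Ring A] [HopfAlgebra k A] {N : Subalgebra k A}

namespace IsLeftCoidealSubalgebra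

theorem injective_map_id_val :
    Function.Injective (Algebra.TensorProduct.map (AlgHom.id k A) N.val) :=
  Module.Flat.lTensor_preserves_injective_linearMap N.val.toLinearMap Subtype.val_injective

/-- The coaction `N → A ⊗ N` of a left coideal subalgebra, i.e. the corestriction of `Δ`. -/
def coaction (hN : IsLeftCoidealSubalgebra k N) : N →ₐ[k] A ⊗[k] N :=
  (AlgEquiv.ofInjective _ injective_map_id_val).symm.toAlgHom.comp
    (((Bialgebra.comulAlgHom k A).comp N.val).codRestrict
      (Algebra.TensorProduct.map (AlgHom.id k A) N.val).range fun n => hN n n.2)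

variable (hN : IsLeftCoidealSubalgebra k N)

theorem map_id_val_coaction (n : N) :
    Algebra.TensorProduct.map (AlgHom.id k A) N.val (hN.coaction n) = comul (R := k) (n : A) :=
  congrArg Subtype.val ((AlgEquiv.ofInjective _ injective_map_id_val).apply_symm_apply _)

theorem exists_coaction_eq_sum {ι : Type*} (b : Module.Basis ι k A) (n : N) :
    ∃ c : ι →₀ N, hN.coaction n = ∑ i ∈ c.support, b i ⊗ₜ[k] c i :=
  let ⟨c, hc⟩ := TensorProduct.eq_repr_basis_left b (hN.coaction n)
  ⟨c, hc.symm⟩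

theorem exists_comul_eq_sum (hN : IsLeftCoidealSubalgebra k N) {ι : Type*} (b : Module.Basis ι k A)
    {x : A} (hx : x ∈ N) :
    ∃ c : ι →₀ N, comul (R := k) x = ∑ i ∈ c.support, b i ⊗ₜ[k] (c i : A) :=
  let ⟨c, hc⟩ := hN.exists_coaction_eq_sum b ⟨x, hx⟩
  ⟨c, by simpa [hc] using (hN.map_id_val_coaction ⟨x, hx⟩).symm⟩

/-- The tensor product `A ⊗ V` with the diagonal action `n • (a ⊗ v) = n₁ a ⊗ n₂ v` of a left
coideal subalgebra `N`. It is a type synonym because `A ⊗ V` already carries the action of `N` on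
the first factor. -/
def DiagonalTensor (_hN : IsLeftCoidealSubalgebra k N) (V : Type*) [AddCommGroup V] [Module k V] :
    Type _ :=
  A ⊗[k] V

namespace DiagonalTensor
variable (V : Type*) [AddCommGroup V] [Module k V]

instance : AddCommGroup (hN.DiagonalTensor V) := inferInstanceAs (AddCommGroup (A ⊗[k] V))

instance : Module k (hN.DiagonalTensor V) := inferInstanceAs (Module k (A ⊗[k] V))

instance [Module.Finite k A] [Module.Finite k V] : Module.Finite k (hN.DiagonalTensor V) :=
  inferInstanceAs (Module.Finite k (A ⊗[k] V))

theorem finrank_eq : Module.finrank k (hN.DiagonalTensor V) =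
    Module.finrank k A * Module.finrank k V :=
  Module.finrank_tensorProduct

variable [Module N V] [IsScalarTower k N V]

variable (k A N) in
/-- The algebra `A ⊗ N` acting on `A ⊗ V` factorwise. -/
def tensorAction : A ⊗[k] N →ₐ[k] Module.End k (A ⊗[k] V) :=
  Module.endTensorEndAlgHom.comp
    (Algebra.TensorProduct.map (Algebra.lmul k A) (Algebra.lsmul k k V))

@[simp]
theorem tensorAction_tmul_tmul (a x : A) (n : N) (v : V) :
    tensorAction k A N V (a ⊗ₜ n) (x ⊗ₜ v) = (a * x) ⊗ₜ (n • v) := rfl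

instance : Module N (hN.DiagonalTensor V) :=
  Module.compHom (A ⊗[k] V) ((tensorAction k A N V).comp hN.coaction).toRingHom

theorem smul_def (n : N) (w : hN.DiagonalTensor V) :
    n • w = tensorAction k A N V (hN.coaction n) w := rfl

instance : IsScalarTower k N (hN.DiagonalTensor V) where
  smul_assoc c n w := by
    rw [smul_def, smul_def, map_smul, map_smul]
    rfl

end DiagonalTensor

section Twist

variable {V : Type*} [AddCommGroup V] [Module k V] [Module N V] [IsScalarTower k N V]

theorem map_mulRight_mul (a : A) (h : A →ₗ[N] V) (t : A ⊗[k] N) (z : A ⊗[k] A) :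
    TensorProduct.map (LinearMap.mulRight k a) (h.restrictScalars k)
        (Algebra.TensorProduct.map (AlgHom.id k A) N.val t * z) =
      DiagonalTensor.tensorAction k A N V t
        (TensorProduct.map (LinearMap.mulRight k a) (h.restrictScalars k) z) := by
  induction t with
  | zero => simp
  | add t t' ht ht' => simp only [map_add, add_mul, ht, ht', LinearMap.add_apply]
  | tmul x n =>
    induction z with
    | zero => simp
    | add z z' hz hz' => simp only [mul_add, map_add, hz, hz']
    | tmul y m =>
      have hm : h (n * m) = n • h m := map_smul h n m
      simp [mul_assoc, hm]

/-- For `a ∈ A` and an `N`-linear map `h : A → V`, the `N`-linear map `m ↦ m₁ a ⊗ h(m₂)` into the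
diagonal tensor product. -/
def comulTwist (a : A) (h : A →ₗ[N] V) : A →ₗ[N] hN.DiagonalTensor V where
  toFun m := TensorProduct.map (LinearMap.mulRight k a) (h.restrictScalars k) (comul (R := k) m)
  map_add' m m' := by rw [map_add, map_add]; rfl
  map_smul' n m := by
    rw [Subalgebra.smul_def, smul_eq_mul, Bialgebra.comul_mul, ← hN.map_id_val_coaction,
      map_mulRight_mul]
    rfl

/-- The linear map `A ⊗ Hom_N(A, V) → Hom_N(A, A ⊗ V)` collecting the maps `comulTwist a h`. -/
def twist : A ⊗[k] (A →ₗ[N] V) →ₗ[k] (A →ₗ[N] hN.DiagonalTensor V) :=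
  TensorProduct.lift <| LinearMap.mk₂ k hN.comulTwist
    (fun a a' h => LinearMap.ext fun m => by
      change TensorProduct.map ((LinearMap.mul k A).flip (a + a')) _ (comul (R := k) m) = _
      rw [map_add, TensorProduct.map_add_left]
      rfl)
    (fun c a h => LinearMap.ext fun m => by
      change TensorProduct.map ((LinearMap.mul k A).flip (c • a)) _ (comul (R := k) m) = _
      rw [map_smul, TensorProduct.map_smul_left]
      rfl)
    (fun a h h' => LinearMap.ext fun m =>
      congr($(TensorProduct.map_add_right (LinearMap.mulRight k a) (h.restrictScalars k)
        (h'.restrictScalars k)) (comul m)))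
    (fun c a h => LinearMap.ext fun m =>
      congr($(TensorProduct.map_smul_right c (LinearMap.mulRight k a) (h.restrictScalars k))
        (comul m)))

-- The antipode on the first leg strips the twist off: `S(m₁) (m₂ a) ⊗ h(m₃) = a ⊗ h(m)`.
theorem sum_antipode_mul_twist {ι : Type*} {s : Finset ι} {d c : ι → A} {m : A}
    (hm : comul (R := k) m = ∑ i ∈ s, d i ⊗ₜ[k] c i) (t : A ⊗[k] (A →ₗ[N] V)) :
    ∑ i ∈ s, (LinearMap.mulLeft k (antipode k (d i))).rTensor V (hN.twist t (c i)) =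
      TensorProduct.lTensorHomToHomLTensor (.id k) A A V
        ((LinearMap.restrictScalarsₗ k N A V k).lTensor A t) m := by
  induction t with
  | zero =>
    rw [map_zero, map_zero, map_zero]
    exact Finset.sum_eq_zero fun i _ => map_zero _
  | add t t' ht ht' =>
    rw [map_add, map_add, map_add, LinearMap.add_apply, ← ht, ← ht', ← Finset.sum_add_distrib]
    exact Finset.sum_congr rfl fun i _ => map_add _ _ _
  | tmul a h =>
    have := congr(TensorProduct.map (LinearMap.mulRight k a) (h.restrictScalars k)
      $(sum_antipode_tmul_one_mul_comul hm))
    simp only [map_sum, TensorProduct.map_tmul, LinearMap.mulRight_apply, one_mul,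
      LinearMap.restrictScalars_apply] at this
    refine Eq.trans (Finset.sum_congr rfl fun i _ => ?_) this
    change LinearMap.rTensor V _ (TensorProduct.map _ _ (comul (R := k) (c i))) = _
    induction comul (R := k) (c i) with
    | zero => simp
    | tmul x y => simp [mul_assoc]
    | add x y hx hy => simp only [mul_add, hx, hy, map_add]

theorem twist_injective [Module.Finite k A] :
    Function.Injective (hN.twist : A ⊗[k] (A →ₗ[N] V) →ₗ[k] (A →ₗ[N] hN.DiagonalTensor V)) := by
  refine (injective_iff_map_eq_zero _).2 fun t ht => ?_
  refine (Module.Flat.lTensor_preserves_injective_linearMap (LinearMap.restrictScalarsₗ k N A V k)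
    (LinearMap.restrictScalars_injective k)).eq_iff' (map_zero _) |>.1 ?_
  refine (lTensorHomEquivHomLTensor k A A V).injective.eq_iff' (map_zero _) |>.1 ?_
  refine LinearMap.ext fun m => ?_
  obtain ⟨s, hs⟩ := TensorProduct.exists_finset (comul (R := k) m)
  rw [LinearMap.zero_apply, lTensorHomEquivHomLTensor_apply, ← hN.sum_antipode_mul_twist hs, ht]
  exact Finset.sum_eq_zero fun i _ => map_zero _

theorem finrank_mul_finrank_linearMap_le [Module.Finite k A] [Module.Finite k V] :
    Module.finrank k A * Module.finrank k (A →ₗ[N] V) ≤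
      Module.finrank k (A →ₗ[N] hN.DiagonalTensor V) :=
  Module.finrank_tensorProduct.symm.trans_le
    (LinearMap.finrank_le_finrank_of_injective hN.twist_injective)

end Twist

theorem homRatioEq_diagonalTensor [Module.Finite k A] {V : Type u} [AddCommGroup V] [Module k V]
    [Module N V] [IsScalarTower k N V] [Module.Finite k V] {a b : ℕ}
    (hle : HomRatioLE k N A a b) (h : HomRatioEq k N A V a b) :
    HomRatioEq k N A (hN.DiagonalTensor V) a b := by
  refine (hle _).antisymm ?_
  rw [DiagonalTensor.finrank_eq, mul_left_comm, ← h, mul_left_comm]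
  exact Nat.mul_le_mul_left b hN.finrank_mul_finrank_linearMap_le

section Faithful

variable {V : Type*} [AddCommGroup V] [Module k V] [Module N V] [IsScalarTower k N V]

theorem eq_zero_of_smul_diagonalTensor_eq_zero
    (hS : Function.Bijective (antipode k : A →ₗ[k] A)) {n : N}
    (hn : ∀ w : hN.DiagonalTensor V, n • w = 0) {h : A →ₗ[N] V} (hh : h ≠ 0) : n = 0 := by
  obtain ⟨z, hz⟩ := DFunLike.ne_iff.1 hh
  let b := Module.Basis.ofVectorSpace k A
  obtain ⟨c, hc⟩ := hN.exists_coaction_eq_sum b n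
  have hann (v : V) {i} (hi : i ∈ c.support) : c i • v = 0 := by
    refine eq_zero_of_sum_basis_tmul_eq_zero b (m := fun i => c i • v) ?_ hi
    have : DiagonalTensor.tensorAction k A N V (hN.coaction n) (1 ⊗ₜ v) = 0 := hn (1 ⊗ₜ[k] v)
    simpa [hc] using this
  have hcomul : comul (R := k) (n : A) = ∑ i ∈ c.support, b i ⊗ₜ[k] (c i : A) := by
    simp [← hN.map_id_val_coaction, hc]
  have hnz : (n : A) ⊗ₜ[k] h z = 0 := by
    have := congr((h.restrictScalars k ∘ₗ LinearMap.mulRight k z).lTensor A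
      $(lTensor_assoc_rTensor_comul (flipMulAntipodeInv_comul hS) (n : A)))
    simp only [LinearMap.lTensor_tmul, LinearMap.comp_apply, LinearMap.mulRight_apply, one_mul,
      LinearMap.restrictScalars_apply] at this
    rw [← this, hcomul]
    simp only [map_sum, LinearMap.rTensor_tmul]
    refine Finset.sum_eq_zero fun i hi => ?_
    induction comul (R := k) (b i) with
    | zero => simp
    | tmul x y =>
      have : h (c i * antipodeInv k A hS y * z) = 0 := by
        rw [mul_assoc, ← smul_eq_mul, ← Subalgebra.smul_def, map_smul, hann _ hi]
      simp [this]
    | add x y hx hy => simp only [TensorProduct.add_tmul, hx, hy, map_add, add_zero]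
  refine Subtype.ext <| (Module.forall_dual_apply_eq_zero_iff k (n : A)).1 fun φ => ?_
  have := congr(TensorProduct.lid k V (φ.rTensor V $hnz))
  simpa [show h z ≠ 0 from hz] using this

end Faithful

end IsLeftCoidealSubalgebra

end Diagonal

section Projectivity

open Coalgebra HopfAlgebra
variable {k : Type v} [Field k] {A : Type u} [Ring A] [HopfAlgebra k A] {N : Subalgebra k A}

namespace IsLeftCoidealSubalgebra

theorem exists_injective_pi (hN : IsLeftCoidealSubalgebra k N)
    (hS : Function.Bijective (antipode k : A →ₗ[k] A)) [Module.Finite k A]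
    {V : Type*} [AddCommGroup V] [Module k V] [Module N V] [IsScalarTower k N V]
    [Module.Finite k V] {h : A →ₗ[N] V} (hh : h ≠ 0) :
    ∃ (m : ℕ) (f : N →ₗ[N] Fin m → hN.DiagonalTensor V), Function.Injective f := by
  let b := Module.finBasis k (hN.DiagonalTensor V)
  refine ⟨_, .pi fun i => LinearMap.toSpanSingleton N _ (b i), ?_⟩
  refine (injective_iff_map_eq_zero _).2 fun n hn => ?_
  refine hN.eq_zero_of_smul_diagonalTensor_eq_zero hS (fun w => ?_) hh
  have hzero : Algebra.lsmul k k (hN.DiagonalTensor V) n = 0 :=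
    b.ext fun i => congr_fun hn i
  exact LinearMap.congr_fun hzero w

theorem exists_homRatioLE_and_homRatioEq_self (hN : IsLeftCoidealSubalgebra k N)
    (hS : Function.Bijective (antipode k : A →ₗ[k] A)) [Module.Finite k A] :
    ∃ a b : ℕ, a ≠ 0 ∧ b ≠ 0 ∧ HomRatioLE k N A a b ∧ HomRatioEq k N A N a b := by
  have : Nontrivial A := (Bialgebra.counitAlgHom k A).toRingHom.domain_nontrivial
  have : Module.Finite k N := inferInstanceAs (Module.Finite k (Subalgebra.toSubmodule N))
  obtain ⟨I, hI, a, b, hb, hle, hIeq⟩ := exists_homRatioLE_and_homRatioEq (k := k) (R := N) (M := A)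
  have : Nontrivial (N ⧸ I) := Submodule.Quotient.nontrivial_iff.2 hI
  have ha : a ≠ 0 := hle.ne_zero hb
  obtain ⟨h, hh⟩ := hIeq.exists_linearMap_ne_zero ha
  obtain ⟨m, f, hf⟩ := hN.exists_injective_pi hS hh
  exact ⟨a, b, ha, hb, hle, ((hN.homRatioEq_diagonalTensor hle hIeq).pi m).of_injective hle hf⟩

theorem projective (hN : IsLeftCoidealSubalgebra k N)
    (hS : Function.Bijective (antipode k : A →ₗ[k] A)) [Module.Finite k A] :
    Module.Projective N A :=
  have : Module.Finite k N := inferInstanceAs (Module.Finite k (Subalgebra.toSubmodule N))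
  let ⟨_, _, _, hb, hle, h⟩ := hN.exists_homRatioLE_and_homRatioEq_self hS
  h.projective hle hb

theorem iSup_range_eq_top (hN : IsLeftCoidealSubalgebra k N)
    (hS : Function.Bijective (antipode k : A →ₗ[k] A)) [Module.Finite k A] :
    ⨆ f : A →ₗ[N] N, LinearMap.range f = ⊤ :=
  have : Module.Finite k N := inferInstanceAs (Module.Finite k (Subalgebra.toSubmodule N))
  let ⟨_, _, ha, hb, hle, h⟩ := hN.exists_homRatioLE_and_homRatioEq_self hS
  h.iSup_range_eq_top hle ha hb

theorem exists_linearMap_counit_eq (hN : IsLeftCoidealSubalgebra k N)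
    (hS : Function.Bijective (antipode k : A →ₗ[k] A)) [Module.Finite k A] :
    ∃ f : A →ₗ[N] N, ∀ a, counit (R := k) (f a : A) = counit (R := k) a := by
  have := hN.projective hS
  let _ : Module N k := Module.compHom k ((Bialgebra.counitAlgHom k A).comp N.val).toRingHom
  let εA : A →ₗ[N] k :=
    { toFun := counit (R := k)
      map_add' := map_add _
      map_smul' := fun n a => Bialgebra.counit_mul _ _ }
  let εN : N →ₗ[N] k :=
    { toFun := fun n => counit (R := k) (n : A)
      map_add' := fun _ _ => map_add _ _ _
      map_smul' := fun n a => Bialgebra.counit_mul (n : A) (a : A) }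
  have hεN : Function.Surjective εN := fun c => ⟨algebraMap k N c, Bialgebra.counit_algebraMap c⟩
  obtain ⟨f, hf⟩ := Module.projective_lifting_property εN εA hεN
  exact ⟨f, LinearMap.congr_fun hf⟩

theorem one_mem_mul_of_one_mem_mul_top (hN : IsLeftCoidealSubalgebra k N)
    (hS : Function.Bijective (antipode k : A →ₗ[k] A)) [Module.Finite k A] {D : Submodule k A}
    (hD : D ≤ N.toSubmodule) (h : 1 ∈ D * ⊤) : 1 ∈ D * N.toSubmodule := by
  have hmul (f : A →ₗ[N] N) (x : A) {y : A} (hy : y ∈ D * ⊤) :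
      (f (y * x) : A) ∈ D * N.toSubmodule := by
    induction hy using Submodule.mul_induction_on' with
    | mem_mul_mem d hd a _ =>
      have : f (d * a * x) = ⟨d, hD hd⟩ * f (a * x) := by
        rw [mul_assoc]
        exact map_smul f (⟨d, hD hd⟩ : N) (a * x)
      rw [this]
      exact Submodule.mul_mem_mul hd (f (a * x)).2
    | add y _ z _ hy hz =>
      rw [add_mul, map_add]
      exact add_mem hy hz
  suffices key : ∀ n ∈ ⨆ f : A →ₗ[N] N, LinearMap.range f, (n : A) ∈ D * N.toSubmodule from
    key 1 (by simp [hN.iSup_range_eq_top hS])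
  intro n hn
  induction hn using Submodule.iSup_induction' with
  | mem f _ hn =>
    obtain ⟨x, rfl⟩ := hn
    simpa using hmul f x h
  | zero => exact zero_mem _
  | add _ _ _ _ hx hy => exact add_mem hx hy

end IsLeftCoidealSubalgebra

end Projectivity

section Semisimple

variable {k : Type v} [Field k] {A : Type u} [Ring A]

theorem exists_left_integral_of_isSemisimpleRing [Algebra k A] [IsSemisimpleRing A]
    (ε : A →ₐ[k] k) : ∃ e : A, ε e = 1 ∧ ∀ a, a * e = ε a • e := by
  obtain ⟨J, hJ⟩ := exists_isCompl (RingHom.ker ε : Ideal A)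
  obtain ⟨i, hi, e, he, hie⟩ := Submodule.mem_sup.1
    (hJ.sup_eq_top ▸ Submodule.mem_top (x := (1 : A)))
  refine ⟨e, by simpa [(RingHom.mem_ker).1 hi] using congr(ε $hie), fun a => ?_⟩
  have hker : (a - algebraMap k A (ε a)) * e ∈ RingHom.ker ε := by simp [RingHom.mem_ker]
  have := Submodule.disjoint_def.1 hJ.disjoint _ hker (J.smul_mem _ he)
  rwa [sub_mul, sub_eq_zero, ← Algebra.smul_def] at this

theorem exists_right_integral_of_isSemisimpleRing [Algebra k A] [IsSemisimpleRing A]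
    (ε : A →ₐ[k] k) : ∃ e : A, ε e = 1 ∧ ∀ a, e * a = ε a • e :=
  let ⟨e, he, hmul⟩ := exists_left_integral_of_isSemisimpleRing
    (ε.fromOpposite fun _ _ => mul_comm _ _)
  ⟨e.unop, he, fun a => congrArg MulOpposite.unop (hmul (.op a))⟩

end Semisimple

section Integral

open Coalgebra HopfAlgebra
variable {k : Type v} [Field k] {A : Type u} [Ring A] [HopfAlgebra k A] {N : Subalgebra k A}

variable (k) in
/-- `P` is a two-sided integral of the subalgebra `N`, lies in `N` and has counit one; it is the
projection `P_N`. -/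
structure IsNormalizedIntegral (N : Subalgebra k A) (P : A) : Prop where
  mem : P ∈ N
  counit_eq_one : counit (R := k) P = 1
  mul_left : ∀ n ∈ N, n * P = counit (R := k) n • P
  mul_right : ∀ n ∈ N, P * n = counit (R := k) n • P

theorem isNormalizedIntegral_of_left_of_right {P Q : A} (hP : P ∈ N) (hP1 : counit (R := k) P = 1)
    (hPl : ∀ n ∈ N, n * P = counit (R := k) n • P) (hQ : Q ∈ N) (hQ1 : counit (R := k) Q = 1)
    (hQr : ∀ n ∈ N, Q * n = counit (R := k) n • Q) : IsNormalizedIntegral k N P := by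
  have hPQ := hPl Q hQ
  rw [hQr P hP, hP1, hQ1, one_smul, one_smul] at hPQ
  exact ⟨hP, hP1, hPl, hPQ ▸ hQr⟩

theorem IsNormalizedIntegral.unique {P Q : A} (hP : IsNormalizedIntegral k N P)
    (hQ : IsNormalizedIntegral k N Q) : P = Q := by
  have h := hP.mul_left Q hQ.mem
  rwa [hQ.mul_right P hP.mem, hP.counit_eq_one, hQ.counit_eq_one, one_smul, one_smul,
    eq_comm] at h

theorem exists_isNormalizedIntegral_top [IsSemisimpleRing A] :
    ∃ e : A, IsNormalizedIntegral k ⊤ e :=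
  let ⟨e, he, hl⟩ := exists_left_integral_of_isSemisimpleRing (Bialgebra.counitAlgHom k A)
  let ⟨_, he', hr⟩ := exists_right_integral_of_isSemisimpleRing (Bialgebra.counitAlgHom k A)
  ⟨e, isNormalizedIntegral_of_left_of_right trivial he (fun a _ => hl a) trivial he'
    fun a _ => hr a⟩

namespace IsLeftCoidealSubalgebra

protected theorem top : IsLeftCoidealSubalgebra k (⊤ : Subalgebra k A) := fun x _ => by
  have hsurj : Function.Surjective (Subalgebra.toSubmodule (⊤ : Subalgebra k A)).subtype :=
    fun a => ⟨⟨a, trivial⟩, rfl⟩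
  exact TensorProduct.map_surjective Function.surjective_id hsurj _

theorem mem_NPrSet (hN : IsLeftCoidealSubalgebra k N) {P x : A}
    (hP : ∀ n ∈ N, n * P = counit (R := k) n • P) (hx : x ∈ N) : x ∈ NPrSet k P := by
  obtain ⟨c, hc⟩ := hN.exists_comul_eq_sum (.ofVectorSpace k A) hx
  change _ = _
  conv_rhs => rw [← sum_counit_smul_left hc]
  rw [hc, Finset.sum_mul, TensorProduct.sum_tmul]
  refine Finset.sum_congr rfl fun i _ => ?_
  rw [Algebra.TensorProduct.tmul_mul_tmul, mul_one, hP _ (c i).2, TensorProduct.smul_tmul]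

theorem mem_NPlSet (hN : IsLeftCoidealSubalgebra k N) {P x : A}
    (hP : ∀ n ∈ N, P * n = counit (R := k) n • P) (hx : x ∈ N) : x ∈ NPlSet k P := by
  obtain ⟨c, hc⟩ := hN.exists_comul_eq_sum (.ofVectorSpace k A) hx
  change _ = _
  conv_rhs => rw [← sum_counit_smul_left hc]
  rw [hc, Finset.mul_sum, TensorProduct.sum_tmul]
  refine Finset.sum_congr rfl fun i _ => ?_
  rw [Algebra.TensorProduct.tmul_mul_tmul, one_mul, hP _ (c i).2, TensorProduct.smul_tmul]

theorem one_tmul_mul_comul (hN : IsLeftCoidealSubalgebra k N) {P x : A}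
    (hP : ∀ n ∈ N, n * P = counit (R := k) n • P) (hx : x ∈ N) :
    (1 ⊗ₜ[k] x) * comul P = (antipode k x ⊗ₜ[k] 1) * comul (R := k) P := by
  obtain ⟨c, hc⟩ := hN.exists_comul_eq_sum (.ofVectorSpace k A) hx
  rw [← sum_antipode_tmul_one_mul_comul hc, Finset.sum_mul]
  conv_rhs => rw [← sum_counit_smul_left hc]
  simp only [mul_assoc, ← Bialgebra.comul_mul, hP _ (c _).2, map_sum, map_smul, mul_smul_comm,
    TensorProduct.sum_tmul, Finset.sum_mul, ← TensorProduct.smul_tmul', smul_mul_assoc]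

theorem comul_mul_one_tmul (hN : IsLeftCoidealSubalgebra k N)
    (hS : Function.Bijective (antipode k : A →ₗ[k] A)) {P x : A}
    (hP : ∀ n ∈ N, P * n = counit (R := k) n • P) (hx : x ∈ N) :
    comul (R := k) P * (1 ⊗ₜ[k] x) = comul P * (antipodeInv k A hS x ⊗ₜ[k] 1) := by
  obtain ⟨c, hc⟩ := hN.exists_comul_eq_sum (.ofVectorSpace k A) hx
  rw [← sum_comul_mul_antipodeInv_tmul_one hS hc, Finset.mul_sum]
  conv_rhs => rw [← sum_counit_smul_left hc]
  simp only [← mul_assoc, ← Bialgebra.comul_mul, hP _ (c _).2, map_sum, map_smul, mul_smul_comm,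
    TensorProduct.sum_tmul, Finset.mul_sum, ← TensorProduct.smul_tmul', smul_mul_assoc]

end IsLeftCoidealSubalgebra

section Slice

variable (k A) in
/-- The slice map sends `z ∈ A ⊗ A` and `f ∈ A*` to `(f ⊗ id)(z)`. The range of `slice k A (Δ(P))`
is the left coideal `V_P`. -/
def slice : A ⊗[k] A →ₗ[k] Module.Dual k A →ₗ[k] A :=
  dualTensorHom k (Module.Dual k A) A ∘ₗ (Module.Dual.eval k A).rTensor A

@[simp]
theorem slice_tmul (a c : A) (f : Module.Dual k A) : slice k A (a ⊗ₜ c) f = f a • c := rfl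

theorem slice_mul_one_tmul (z : A ⊗[k] A) (f : Module.Dual k A) (x : A) :
    slice k A (z * (1 ⊗ₜ x)) f = slice k A z f * x := by
  induction z with
  | zero => simp
  | tmul a c => simp
  | add z z' hz hz' => simp only [add_mul, map_add, LinearMap.add_apply, hz, hz']

theorem slice_one_tmul_mul (z : A ⊗[k] A) (f : Module.Dual k A) (x : A) :
    slice k A ((1 ⊗ₜ x) * z) f = x * slice k A z f := by
  induction z with
  | zero => simp
  | tmul a c => simp
  | add z z' hz hz' => simp only [mul_add, map_add, LinearMap.add_apply, hz, hz']

theorem slice_mul_tmul_one (z : A ⊗[k] A) (f : Module.Dual k A) (x : A) :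
    slice k A (z * (x ⊗ₜ 1)) f = slice k A z ((LinearMap.mulRight k x).dualMap f) := by
  induction z with
  | zero => simp
  | tmul a c => simp
  | add z z' hz hz' => simp only [add_mul, map_add, LinearMap.add_apply, hz, hz']

theorem slice_tmul_one_mul (z : A ⊗[k] A) (f : Module.Dual k A) (x : A) :
    slice k A ((x ⊗ₜ 1) * z) f = slice k A z ((LinearMap.mulLeft k x).dualMap f) := by
  induction z with
  | zero => simp
  | tmul a c => simp
  | add z z' hz hz' => simp only [mul_add, map_add, LinearMap.add_apply, hz, hz']

theorem mem_range_slice_sum {ι : Type*} (b : Module.Basis ι k A) {s : Finset ι} {c : ι → A} {i : ι}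
    (hi : i ∈ s) : c i ∈ LinearMap.range (slice k A (∑ i ∈ s, b i ⊗ₜ c i)) := by
  classical
  exact ⟨b.coord i, by simp [Finsupp.single_apply, hi]⟩

theorem finite_range_slice (z : A ⊗[k] A) : Module.Finite k (LinearMap.range (slice k A z)) := by
  classical
  obtain ⟨s, rfl⟩ := TensorProduct.exists_finset z
  refine Submodule.finiteDimensional_of_le (S₂ := Submodule.span k (s.image Prod.snd)) ?_
  rintro _ ⟨f, rfl⟩
  rw [map_sum, LinearMap.sum_apply]
  exact Submodule.sum_mem _ fun p hp => Submodule.smul_mem _ _ <| Submodule.subset_span <|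
    Finset.mem_image_of_mem _ hp

end Slice

section IntegralSlice

theorem finite_of_range_slice_eq_top {z : A ⊗[k] A} (hz : LinearMap.range (slice k A z) = ⊤) :
    Module.Finite k A :=
  have := finite_range_slice z
  .of_surjective (LinearMap.range (slice k A z)).subtype fun a => ⟨⟨a, hz ▸ trivial⟩, rfl⟩

theorem one_mem_range_slice_comul_mul_top (hS : Function.Bijective (antipode k : A →ₗ[k] A)) {P : A}
    (hP : counit (R := k) P = 1) :
    1 ∈ LinearMap.range (slice k A (comul P)) * (⊤ : Submodule k A) := by
  let b := Module.Basis.ofVectorSpace k A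
  obtain ⟨c, hc⟩ := TensorProduct.eq_repr_basis_left b (comul (R := k) P)
  have hsum := sum_mul_antipodeInv hS hc.symm
  rw [hP, map_one] at hsum
  rw [← hsum]
  refine Submodule.sum_mem _ fun i hi => Submodule.mul_mem_mul ?_ trivial
  rw [← hc]
  exact mem_range_slice_sum b hi

namespace IsLeftCoidealSubalgebra

theorem range_slice_comul_le (hN : IsLeftCoidealSubalgebra k N) {x : A} (hx : x ∈ N) :
    LinearMap.range (slice k A (comul x)) ≤ N.toSubmodule := by
  rintro _ ⟨f, rfl⟩
  obtain ⟨c, hc⟩ := hN.exists_comul_eq_sum (.ofVectorSpace k A) hx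
  rw [hc, map_sum, LinearMap.sum_apply]
  exact Submodule.sum_mem _ fun i _ => N.smul_mem (c i).2 _

theorem mul_le_range_slice_comul (hN : IsLeftCoidealSubalgebra k N)
    (hS : Function.Bijective (antipode k : A →ₗ[k] A)) {P : A}
    (hP : ∀ n ∈ N, P * n = counit (R := k) n • P) :
    LinearMap.range (slice k A (comul P)) * N.toSubmodule ≤
      LinearMap.range (slice k A (comul P)) := by
  refine Submodule.mul_le.2 ?_
  rintro _ ⟨f, rfl⟩ n hn
  rw [← slice_mul_one_tmul, hN.comul_mul_one_tmul hS hP hn, slice_mul_tmul_one]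
  exact LinearMap.mem_range_self _ _

theorem le_range_slice_comul (hN : IsLeftCoidealSubalgebra k N)
    (hS : Function.Bijective (antipode k : A →ₗ[k] A)) {P : A}
    (hP : ∀ n ∈ N, P * n = counit (R := k) n • P)
    (h : 1 ∈ LinearMap.range (slice k A (comul P)) * N.toSubmodule) :
    N.toSubmodule ≤ LinearMap.range (slice k A (comul P)) := fun n hn => by
  have hle := hN.mul_le_range_slice_comul hS hP
  simpa using hle (Submodule.mul_mem_mul (hle h) hn)

end IsLeftCoidealSubalgebra

theorem IsNormalizedIntegral.range_slice_comul_eq_top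
    (hS : Function.Bijective (antipode k : A →ₗ[k] A)) {e : A} (he : IsNormalizedIntegral k ⊤ e) :
    LinearMap.range (slice k A (comul e)) = ⊤ :=
  top_unique <| IsLeftCoidealSubalgebra.top.le_range_slice_comul hS he.mul_right <|
    one_mem_range_slice_comul_mul_top hS he.counit_eq_one

theorem finite_of_isSemisimpleRing [IsSemisimpleRing A]
    (hS : Function.Bijective (antipode k : A →ₗ[k] A)) : Module.Finite k A :=
  let ⟨_, he⟩ := exists_isNormalizedIntegral_top (k := k) (A := A)
  finite_of_range_slice_eq_top (he.range_slice_comul_eq_top hS)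

theorem IsNormalizedIntegral.mul_slice_comul {e : A} (he : IsNormalizedIntegral k ⊤ e) (x : A)
    (f : Module.Dual k A) : x * slice k A (comul e) f =
      slice k A (comul e) ((LinearMap.mulLeft k (antipode k x)).dualMap f) := by
  rw [← slice_one_tmul_mul, IsLeftCoidealSubalgebra.top.one_tmul_mul_comul he.mul_left trivial,
    slice_tmul_one_mul]

theorem IsNormalizedIntegral.finrank_range_mulLeft_antipode
    (hS : Function.Bijective (antipode k : A →ₗ[k] A)) {e : A} (he : IsNormalizedIntegral k ⊤ e)
    (x : A) : Module.finrank k (LinearMap.range (LinearMap.mulLeft k (antipode k x))) =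
      Module.finrank k (LinearMap.range (LinearMap.mulLeft k x)) := by
  have htop := he.range_slice_comul_eq_top hS
  have := finite_of_range_slice_eq_top htop
  have hsurj : Function.Surjective (slice k A (comul (R := k) e)) := LinearMap.range_eq_top.1 htop
  have hinj : Function.Injective (slice k A (comul (R := k) e)) :=
    (LinearMap.injective_iff_surjective_of_finrank_eq_finrank Subspace.dual_finrank_eq).2 hsurj
  have hcomp : LinearMap.mulLeft k x ∘ₗ slice k A (comul e) =
      slice k A (comul e) ∘ₗ (LinearMap.mulLeft k (antipode k x)).dualMap :=
    LinearMap.ext (he.mul_slice_comul x)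
  rw [← LinearMap.range_comp_of_range_eq_top (LinearMap.mulLeft k x) htop, hcomp,
    LinearMap.range_comp, ← (Submodule.equivMapOfInjective _ hinj _).finrank_eq,
    LinearMap.finrank_range_dualMap_eq_finrank_range]

end IntegralSlice

section Unimodular

theorem antipode_mul_self_of_comul_mul_eq {P : A} (hP : counit (R := k) P = 1)
    (h : comul (R := k) P * (1 ⊗ₜ[k] P) = P ⊗ₜ P) : antipode k P * P = P := by
  have hmul (z : A ⊗[k] A) : LinearMap.mul' k A ((antipode k).rTensor A (z * (1 ⊗ₜ P))) =
      LinearMap.mul' k A ((antipode k).rTensor A z) * P := by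
    induction z with
    | zero => simp
    | tmul a c => simp [mul_assoc]
    | add z z' hz hz' => simp only [add_mul, map_add, hz, hz']
  have := hmul (comul P)
  rw [h, mul_antipode_rTensor_comul_apply, hP, map_one, one_mul] at this
  simpa using this

theorem IsNormalizedIntegral.mul_antipode_eq_of_antipode_mul_eq
    (hS : Function.Bijective (antipode k : A →ₗ[k] A))
    {e P : A} (he : IsNormalizedIntegral k ⊤ e) (hPP : P * P = P) (h : antipode k P * P = P) :
    P * antipode k P = antipode k P := by
  have := finite_of_range_slice_eq_top (he.range_slice_comul_eq_top hS)
  have hle : LinearMap.range (LinearMap.mulLeft k P) ≤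
      LinearMap.range (LinearMap.mulLeft k (antipode k P)) := by
    rintro _ ⟨x, rfl⟩
    exact ⟨P * x, by simp [← mul_assoc, h]⟩
  have heq := Submodule.eq_of_le_of_finrank_eq hle (he.finrank_range_mulLeft_antipode hS P).symm
  obtain ⟨y, hy⟩ : antipode k P ∈ LinearMap.range (LinearMap.mulLeft k P) := heq ▸ ⟨1, by simp⟩
  rw [← hy, LinearMap.mulLeft_apply, ← mul_assoc, hPP]

theorem IsLeftCoidealSubalgebra.mul_right_of_mul_left
    (hN : IsLeftCoidealSubalgebra k N) (hS : Function.Bijective (antipode k : A →ₗ[k] A)) {P : A}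
    (hP : ∀ n ∈ N, n * P = counit (R := k) n • P) (h : P * antipode k P = antipode k P) {n : A}
    (hn : n ∈ N) : P * n = counit (R := k) n • P := by
  have hinv {m : A} (hm : m ∈ N) : P * antipodeInv k A hS m = counit (R := k) m • P := by
    apply hS.1
    rw [antipode_mul_antidistrib, antipode_antipodeInv, map_smul, ← h, ← mul_assoc, hP m hm,
      smul_mul_assoc]
  obtain ⟨c, hc⟩ := hN.exists_comul_eq_sum (.ofVectorSpace k A) hn
  have hsum := congr(P * $(sum_antipodeInv_mul hS hc))
  conv_lhs => rw [← sum_counit_smul_left hc]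
  simp only [Finset.mul_sum, ← mul_assoc, hinv (c _).2, smul_mul_assoc] at hsum
  simp only [Finset.mul_sum, mul_smul_comm]
  rw [hsum, ← Algebra.commutes, ← Algebra.smul_def]

theorem IsLeftCoidealSubalgebra.exists_isNormalizedIntegral [IsSemisimpleRing A]
    (hN : IsLeftCoidealSubalgebra k N) (hS : Function.Bijective (antipode k : A →ₗ[k] A)) :
    ∃ P, IsNormalizedIntegral k N P := by
  have := finite_of_isSemisimpleRing hS
  obtain ⟨e, he⟩ := exists_isNormalizedIntegral_top (k := k) (A := A)
  obtain ⟨f, hf⟩ := hN.exists_linearMap_counit_eq hS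
  have hcounit : counit (R := k) (f e : A) = 1 := by rw [hf, he.counit_eq_one]
  have hleft : ∀ n ∈ N, n * (f e : A) = counit (R := k) n • (f e : A) := fun n hn => by
    have hmul : f (n * e) = ⟨n, hn⟩ * f e := map_smul f (⟨n, hn⟩ : N) e
    have hsmul : counit (R := k) n • e = algebraMap k N (counit n) • e :=
      (algebraMap_smul N _ e).symm
    rw [he.mul_left n trivial, hsmul, map_smul, algebraMap_smul] at hmul
    exact congrArg Subtype.val hmul.symm
  have hidem : (f e : A) * f e = f e := by rw [hleft _ (f e).2, hcounit, one_smul]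
  have hanti := antipode_mul_self_of_comul_mul_eq hcounit (hN.mem_NPrSet hleft (f e).2)
  exact ⟨f e, (f e).2, hcounit, hleft, fun n hn =>
    hN.mul_right_of_mul_left hS hleft (he.mul_antipode_eq_of_antipode_mul_eq hS hidem hanti) hn⟩

end Unimodular

end Integral

section Correspondence

open Coalgebra HopfAlgebra
variable {k : Type v} [Field k] {A : Type u} [Ring A] [HopfAlgebra k A] {N : Subalgebra k A}

theorem IsNormalizedIntegral.subset_NPSet {P : A} (hN : IsLeftCoidealSubalgebra k N)
    (hP : IsNormalizedIntegral k N P) : (N : Set A) ⊆ NPSet k P :=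
  fun _ hx => ⟨hN.mem_NPlSet hP.mul_right hx, hN.mem_NPrSet hP.mul_left hx⟩

theorem IsNormalizedIntegral.isRightGroupLikeProjection {P : A}
    (hN : IsLeftCoidealSubalgebra k N) (hP : IsNormalizedIntegral k N P) :
    IsRightGroupLikeProjection k P := by
  refine ⟨?_, ?_, (hP.subset_NPSet hN hP.mem).2, (hP.subset_NPSet hN hP.mem).1⟩
  · rintro rfl
    simpa using hP.counit_eq_one
  · rw [hP.mul_left P hP.mem, hP.counit_eq_one, one_smul]

variable (k) in
/-- The left coideal subalgebra `N_P`. -/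
def NPSubalgebra (P : A) : Subalgebra k A where
  carrier := NPSet k P
  mul_mem' {x y} hx hy := by
    obtain ⟨hx1, hx2⟩ := hx
    obtain ⟨hy1, hy2⟩ := hy
    change _ = _ at hx1 hx2 hy1 hy2
    constructor
    · change _ = _
      rw [Bialgebra.comul_mul, ← mul_assoc, hx1, ← mul_one x, ← one_mul P,
        ← Algebra.TensorProduct.tmul_mul_tmul, mul_assoc, hy1]
      simp
    · change _ = _
      have hyP : y ⊗ₜ[k] P = (1 ⊗ₜ P) * (y ⊗ₜ 1) := by simp
      rw [Bialgebra.comul_mul, mul_assoc, hy2, hyP, ← mul_assoc, hx2]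
      simp
  add_mem' {x y} hx hy := by
    obtain ⟨hx1, hx2⟩ := hx
    obtain ⟨hy1, hy2⟩ := hy
    change _ = _ at hx1 hx2 hy1 hy2
    constructor
    · change _ = _
      rw [map_add, mul_add, hx1, hy1, TensorProduct.add_tmul]
    · change _ = _
      rw [map_add, add_mul, hx2, hy2, TensorProduct.add_tmul]
  algebraMap_mem' r := by
    constructor <;> change _ = _ <;>
      simp [Algebra.algebraMap_eq_smul_one, TensorProduct.smul_tmul',
        Algebra.TensorProduct.one_def]

theorem lTensor_comul_of_lTensor_comul_eq_tmul {g : A →ₗ[k] A} {P x : A}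
    (hx : g.lTensor A (comul (R := k) x) = x ⊗ₜ[k] P) :
    (g.lTensor A ∘ₗ comul (R := k)).lTensor A (comul (R := k) x) =
      ((TensorProduct.mk k A A).flip P).lTensor A (comul (R := k) x) := by
  have h1 (w : A ⊗[k] A) : (g.lTensor A).lTensor A (TensorProduct.assoc k A A A
      ((comul (R := k)).rTensor A w)) =
      TensorProduct.assoc k A A A ((comul (R := k)).rTensor A (g.lTensor A w)) := by
    induction w with
    | zero => simp
    | add w z hw hz => simp only [map_add, hw, hz]
    | tmul a c =>
      simp only [LinearMap.rTensor_tmul, LinearMap.lTensor_tmul]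
      induction comul (R := k) a with
      | zero => simp
      | add w z hw hz => simp only [map_add, TensorProduct.add_tmul, hw, hz]
      | tmul a b => simp
  rw [LinearMap.lTensor_comp, LinearMap.comp_apply, ← coassoc_apply, h1, hx,
    LinearMap.rTensor_tmul]
  induction comul (R := k) x with
  | zero => simp
  | add w z hw hz => simp only [map_add, TensorProduct.add_tmul, hw, hz]
  | tmul a b => simp

theorem lTensor_mulLeft (P : A) (w : A ⊗[k] A) :
    (LinearMap.mulLeft k P).lTensor A w = (1 ⊗ₜ[k] P) * w := by
  induction w with
  | zero => simp
  | add w z hw hz => simp only [map_add, mul_add, hw, hz]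
  | tmul a b => simp

theorem lTensor_mulRight (P : A) (w : A ⊗[k] A) :
    (LinearMap.mulRight k P).lTensor A w = w * (1 ⊗ₜ[k] P) := by
  induction w with
  | zero => simp
  | add w z hw hz => simp only [map_add, add_mul, hw, hz]
  | tmul a b => simp

theorem mem_NPSubalgebra_iff {P x : A} : x ∈ NPSubalgebra k P ↔
    (LinearMap.mulLeft k P).lTensor A (comul (R := k) x) = x ⊗ₜ[k] P ∧
    (LinearMap.mulRight k P).lTensor A (comul (R := k) x) = x ⊗ₜ[k] P := by
  rw [lTensor_mulLeft, lTensor_mulRight]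
  rfl

theorem isLeftCoidealSubalgebra_NPSubalgebra (P : A) :
    IsLeftCoidealSubalgebra k (NPSubalgebra k P) := by
  intro x hx
  obtain ⟨hl, hr⟩ := mem_NPSubalgebra_iff.1 hx
  let b := Module.Basis.ofVectorSpace k A
  obtain ⟨c, hc⟩ := TensorProduct.eq_repr_basis_left b (comul (R := k) x)
  rw [Finsupp.sum] at hc
  have key {g : A →ₗ[k] A} (hg : g.lTensor A (comul (R := k) x) = x ⊗ₜ[k] P) {i}
      (hi : i ∈ c.support) : g.lTensor A (comul (R := k) (c i)) = c i ⊗ₜ[k] P := by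
    have h := lTensor_comul_of_lTensor_comul_eq_tmul hg
    rw [← hc, ← sub_eq_zero, map_sum, map_sum, ← Finset.sum_sub_distrib] at h
    simp only [LinearMap.lTensor_tmul, ← TensorProduct.tmul_sub] at h
    exact sub_eq_zero.1 (eq_zero_of_sum_basis_tmul_eq_zero b h hi)
  rw [← hc]
  refine Submodule.sum_mem _ fun i hi => ⟨b i ⊗ₜ ⟨c i, ?_⟩, by simp⟩
  exact mem_NPSubalgebra_iff.2 ⟨key hl hi, key hr hi⟩

theorem IsRightGroupLikeProjection.isNormalizedIntegral {P : A}
    (hP : IsRightGroupLikeProjection k P) : IsNormalizedIntegral k (NPSubalgebra k P) P := by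
  obtain ⟨h0, hPP, hPr, hPl⟩ := hP
  have hl : ∀ n ∈ NPSubalgebra k P, n * P = counit (R := k) n • P := fun n hn => by
    have := congr(TensorProduct.lid k A ((counit (R := k)).rTensor A $(hn.2)))
    rw [← lTensor_mulRight, ← LinearMap.comp_apply, LinearMap.rTensor_comp_lTensor,
      ← LinearMap.lTensor_comp_rTensor, LinearMap.comp_apply, rTensor_counit_comul] at this
    simpa using this
  have hr : ∀ n ∈ NPSubalgebra k P, P * n = counit (R := k) n • P := fun n hn => by
    have := congr(TensorProduct.lid k A ((counit (R := k)).rTensor A $(hn.1)))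
    rw [← lTensor_mulLeft, ← LinearMap.comp_apply, LinearMap.rTensor_comp_lTensor,
      ← LinearMap.lTensor_comp_rTensor, LinearMap.comp_apply, rTensor_counit_comul] at this
    simpa using this
  have hmem : P ∈ NPSubalgebra k P := ⟨hPl, hPr⟩
  refine ⟨hmem, ?_, hl, hr⟩
  have := hl P hmem
  rw [hPP] at this
  exact smul_left_injective k h0 (by simpa using this.symm)

theorem IsNormalizedIntegral.NPSubalgebra_eq [Module.Finite k A]
    (hS : Function.Bijective (antipode k : A →ₗ[k] A))
    (hN : IsLeftCoidealSubalgebra k N) {P : A} (hP : IsNormalizedIntegral k N P) :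
    NPSubalgebra k P = N := by
  have hNP := hP.subset_NPSet hN
  have hM := isLeftCoidealSubalgebra_NPSubalgebra (k := k) P
  have hMr := (hP.isRightGroupLikeProjection hN).isNormalizedIntegral.mul_right
  have hDN := hN.range_slice_comul_le hP.mem
  have hone : 1 ∈ LinearMap.range (slice k A (comul P)) * (NPSubalgebra k P).toSubmodule :=
    hM.one_mem_mul_of_one_mem_mul_top hS (hDN.trans hNP)
      (one_mem_range_slice_comul_mul_top hS hP.counit_eq_one)
  exact le_antisymm ((hM.le_range_slice_comul hS hMr hone).trans hDN) hNP

theorem IsNormalizedIntegral.counit_eq_zero_iff {P x : A} (hP : IsNormalizedIntegral k N P)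
    (hx : x ∈ N) : counit (R := k) x = 0 ↔ ∃ y ∈ N, x = (1 - P) * y := by
  constructor
  · intro h
    refine ⟨x, hx, ?_⟩
    rw [sub_mul, hP.mul_right x hx, h, zero_smul, sub_zero, one_mul]
  · rintro ⟨y, -, rfl⟩
    rw [Bialgebra.counit_mul, map_sub, hP.counit_eq_one, Bialgebra.counit_one, sub_self, zero_mul]

theorem isNormalizedIntegral_of_counit_eq_zero_iff {Q : A} (hQ : Q ∈ N) (hQQ : Q * Q = Q)
    (hcomm : ∀ x ∈ N, Q * x = x * Q)
    (h : ∀ x ∈ N, counit (R := k) x = 0 ↔ ∃ y ∈ N, x = (1 - Q) * y) :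
    IsNormalizedIntegral k N Q := by
  have hr : ∀ n ∈ N, Q * n = counit (R := k) n • Q := fun n hn => by
    obtain ⟨y, -, hy⟩ := (h (n - algebraMap k A (counit n))
      (sub_mem hn (N.algebraMap_mem _))).1 (by simp)
    have hQy := congr(Q * $hy)
    rwa [← mul_assoc, mul_sub, mul_sub, mul_one, hQQ, sub_self, zero_mul, sub_eq_zero,
      ← Algebra.commutes, ← Algebra.smul_def] at hQy
  refine ⟨hQ, ?_, fun n hn => (hcomm n hn).symm.trans (hr n hn), hr⟩
  have := (h (1 - Q) (sub_mem N.one_mem hQ)).2 ⟨1, N.one_mem, (mul_one _).symm⟩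
  rwa [map_sub, Bialgebra.counit_one, sub_eq_zero, eq_comm] at this

end Correspondence

/-- Theorem: for a semisimple Hopf algebra `A`, the maps `N ↦ P_N` (the unique central
idempotent of `N` with `ker(ε|_N) = (1 - P_N)N`) and `P ↦ N_P` are mutually inverse
bijections between left coideal subalgebras of `A` and right group-like projections in `A`. -/
theorem statement2 [IsSemisimpleRing A]
    (hS : Function.Bijective (HopfAlgebra.antipode (R := k) : A →ₗ[k] A)) :
    ∃ e : {N : Subalgebra k A // IsLeftCoidealSubalgebra k N} ≃
        {P : A // IsRightGroupLikeProjection k P},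
      (∀ N : {N : Subalgebra k A // IsLeftCoidealSubalgebra k N},
        -- `e N` is the unique central idempotent `P_N` of `N` with
        -- `ker(ε|_N) = (1 - P_N)N`
        (e N).1 ∈ N.1 ∧
        (e N).1 * (e N).1 = (e N).1 ∧
        (∀ x ∈ N.1, (e N).1 * x = x * (e N).1) ∧
        (∀ x ∈ N.1, Coalgebra.counit (R := k) x = 0 ↔
          ∃ y ∈ N.1, x = (1 - (e N).1) * y) ∧
        (∀ Q ∈ N.1, Q * Q = Q → (∀ x ∈ N.1, Q * x = x * Q) →
          (∀ x ∈ N.1, Coalgebra.counit (R := k) x = 0 ↔ ∃ y ∈ N.1, x = (1 - Q) * y) →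
          Q = (e N).1)) ∧
      (∀ P : {P : A // IsRightGroupLikeProjection k P},
        (((e.symm P).1 : Subalgebra k A) : Set A) = NPSet k P.1) := by
  have := finite_of_isSemisimpleRing hS
  choose p hp using fun N : {N : Subalgebra k A // IsLeftCoidealSubalgebra k N} =>
    N.2.exists_isNormalizedIntegral hS
  refine ⟨⟨fun N => ⟨p N, (hp N).isRightGroupLikeProjection N.2⟩,
    fun P => ⟨NPSubalgebra k P.1, isLeftCoidealSubalgebra_NPSubalgebra P.1⟩,
    fun N => Subtype.ext ((hp N).NPSubalgebra_eq hS N.2),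
    fun P => Subtype.ext ((hp _).unique P.2.isNormalizedIntegral)⟩, fun N => ?_, fun P => rfl⟩
  refine ⟨(hp N).mem, ((hp N).isRightGroupLikeProjection N.2).2.1, fun x hx => ?_,
    fun x hx => (hp N).counit_eq_zero_iff hx, fun Q hQ hQQ hcomm h => ?_⟩
  · exact ((hp N).mul_right x hx).trans ((hp N).mul_left x hx).symm
  · exact (isNormalizedIntegral_of_counit_eq_zero_iff hQ hQQ hcomm h).unique (hp N)
end
end

section
/- Let A be a Hopf algebra over a field k with bijective antipode, and let P ∈ A be a right group-like projection. Then each of the left coideal subalgebras N_P, N_P^l and N_P^r is finite-dimensional over k. -/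
open scoped TensorProduct

noncomputable section

variable (k : Type*) [Field k] {A : Type*} [Ring A] [HopfAlgebra k A]

/-!
An element `x` of `N_P^l` satisfies `x S(P₁) ⊗ P₂ = S(P₁) ⊗ P₂ x`, and an element `x` of `N_P^r`
satisfies `S(x) P₁ ⊗ P₂ = P₁ ⊗ x P₂`, so in both cases acting on the first leg of a fixed tensor `t`
agrees with acting on the second. Now `t` lies in `U ⊗ V` with `U` and `V` finite-dimensional; an
operator on the first leg keeps it in `A ⊗ V`, one on the second leg keeps it in `U ⊗ A`, and
the common value therefore lies in `U ⊗ V`. Contracting this value by `S(P₁) P₂ = ε(P)`,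
respectively `P₁ S(P₂) = ε(P)`, recovers `x`, respectively `S(x)`, up to the nonzero scalar `ε(P)`.
-/

open Coalgebra HopfAlgebra TensorProduct WithConv MulOpposite

section Algebra

variable {R B C D : Type*} [CommSemiring R] [Semiring B] [Algebra R B] [Semiring C] [Algebra R C]

lemma mul'_lTensor_tmul_one_mul (f : C →ₗ[R] B) (b : B) (t : B ⊗[R] C) :
    LinearMap.mul' R B (f.lTensor B (b ⊗ₜ 1 * t)) = b * LinearMap.mul' R B (f.lTensor B t) := by
  induction t with
  | zero => simp
  | add u v hu hv => simp only [mul_add, map_add, hu, hv]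
  | tmul b' c => simp [mul_assoc]

lemma includeLeft_comp_convMul_includeRight_comp [AddCommMonoid D] [Module R D]
    [CoalgebraStruct R D] (f : D →ₗ[R] B) (g : D →ₗ[R] C) :
    toConv ((Algebra.TensorProduct.includeLeft : B →ₐ[R] B ⊗[R] C).toLinearMap ∘ₗ f) *
        toConv ((Algebra.TensorProduct.includeRight : C →ₐ[R] B ⊗[R] C).toLinearMap ∘ₗ g) =
      toConv (map f g ∘ₗ comul) := by
  ext x
  simp [(ℛ R x).convMul_apply, ← (ℛ R x).eq]

end Algebra

section FiniteDimensional

variable {K V W B C : Type*} [Field K] [AddCommGroup V] [Module K V] [AddCommGroup W] [Module K W]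
  [Ring B] [Algebra K B] [Ring C] [Algebra K C]

lemma range_rTensor_inf_range_lTensor (p : Submodule K V) (q : Submodule K W) :
    LinearMap.range (p.subtype.rTensor W) ⊓ LinearMap.range (q.subtype.lTensor V) =
      LinearMap.range (mapIncl p q) := by
  obtain ⟨π, hπ⟩ := p.subtype.exists_leftInverse_of_injective p.ker_subtype
  obtain ⟨ρ, hρ⟩ := q.subtype.exists_leftInverse_of_injective q.ker_subtype
  refine le_antisymm ?_ (le_inf ?_ ?_)
  · rintro u ⟨⟨v, rfl⟩, ⟨w, hw⟩⟩
    have hπu : (p.subtype ∘ₗ π).rTensor W (p.subtype.rTensor W v) = p.subtype.rTensor W v := by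
      rw [← LinearMap.rTensor_comp_apply, LinearMap.comp_assoc, hπ, LinearMap.comp_id]
    have hρu : (q.subtype ∘ₗ ρ).lTensor V (p.subtype.rTensor W v) = p.subtype.rTensor W v := by
      rw [← hw, ← LinearMap.lTensor_comp_apply, LinearMap.comp_assoc, hρ, LinearMap.comp_id]
    refine ⟨map π ρ (p.subtype.rTensor W v), ?_⟩
    rw [mapIncl, ← LinearMap.comp_apply, ← map_comp, ← LinearMap.rTensor_comp_lTensor,
      LinearMap.comp_apply, hρu, hπu]
  · rw [mapIncl, ← LinearMap.rTensor_comp_lTensor]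
    exact LinearMap.range_comp_le_range _ _
  · rw [mapIncl, ← LinearMap.lTensor_comp_rTensor]
    exact LinearMap.range_comp_le_range _ _

lemma exists_finiteDimensional_forall_rTensor_eq_lTensor (t : V ⊗[K] W) :
    ∃ F : Submodule K (V ⊗[K] W), FiniteDimensional K F ∧
      ∀ (g : V →ₗ[K] V) (h : W →ₗ[K] W), g.rTensor W t = h.lTensor V t → g.rTensor W t ∈ F := by
  obtain ⟨p, q, _, _, ht⟩ := exists_finite_submodule_of_setFinite {t} (Set.finite_singleton t)
  obtain ⟨t₀, rfl⟩ := ht rfl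
  refine ⟨LinearMap.range (mapIncl p q), inferInstance, fun g h hgh ↦ ?_⟩
  rw [← range_rTensor_inf_range_lTensor]
  constructor
  · rw [hgh]
    exact ⟨map LinearMap.id (h ∘ₗ q.subtype) t₀, by
      simp only [mapIncl, LinearMap.rTensor, LinearMap.lTensor, map_map, LinearMap.comp_id,
        LinearMap.id_comp]⟩
  · exact ⟨map (g ∘ₗ p.subtype) LinearMap.id t₀, by
      simp only [mapIncl, LinearMap.rTensor, LinearMap.lTensor, map_map, LinearMap.comp_id,
        LinearMap.id_comp]⟩

lemma finiteDimensional_span_of_tmul_one_mul_eq {t : B ⊗[K] C} {f : C →ₗ[K] B}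
    (ht : IsUnit (LinearMap.mul' K B (f.lTensor B t))) {s : Set B}
    (hs : ∀ b ∈ s, ∃ c : C, (1 : B) ⊗ₜ[K] c * t = b ⊗ₜ[K] (1 : C) * t) :
    FiniteDimensional K (Submodule.span K s) := by
  obtain ⟨F, _, hF⟩ := exists_finiteDimensional_forall_rTensor_eq_lTensor t
  obtain ⟨e, he⟩ := ht.exists_right_inv
  let recover : B ⊗[K] C →ₗ[K] B := LinearMap.mulRight K e ∘ₗ LinearMap.mul' K B ∘ₗ f.lTensor B
  refine Submodule.finiteDimensional_of_le (S₂ := F.map recover)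
    (Submodule.span_le.2 fun b hb ↦ ?_)
  obtain ⟨c, hc⟩ := hs b hb
  have rTensor_mulLeft : (LinearMap.mulLeft K b).rTensor C t = b ⊗ₜ[K] (1 : C) * t := by
    rw [← LinearMap.mulLeft_apply K, LinearMap.mulLeft_tmul, LinearMap.mulLeft_one,
      LinearMap.rTensor]
  have lTensor_mulLeft : (LinearMap.mulLeft K c).lTensor B t = (1 : B) ⊗ₜ[K] c * t := by
    rw [← LinearMap.mulLeft_apply K, LinearMap.mulLeft_tmul, LinearMap.mulLeft_one,
      LinearMap.lTensor]
  have hmem := hF (LinearMap.mulLeft K b) (LinearMap.mulLeft K c)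
    (by rw [rTensor_mulLeft, lTensor_mulLeft, hc])
  refine ⟨_, hmem, ?_⟩
  simp only [recover, rTensor_mulLeft, LinearMap.comp_apply, LinearMap.mulRight_apply,
    mul'_lTensor_tmul_one_mul, mul_assoc, he, mul_one]

end FiniteDimensional

section Antipode

variable {R H B : Type*} [CommSemiring R] [Semiring H] [HopfAlgebra R H] [Semiring B] [Algebra R B]

lemma algHom_comp_antipode_convMul_cancel (φ : H →ₐ[R] B) (h : WithConv (H →ₗ[R] B)) :
    toConv (φ.toLinearMap ∘ₗ antipode R) * (toConv φ.toLinearMap * h) = h := by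
  have hφ := LinearMap.algHom_comp_convMul_distrib φ (toConv (antipode R (A := H)))
    (toConv LinearMap.id)
  have left_inv : toConv (φ.toLinearMap ∘ₗ antipode R) * toConv φ.toLinearMap = 1 := by
    rw [LinearMap.antipode_mul_id] at hφ
    ext x
    simpa using (LinearMap.congr_fun hφ x).symm
  rw [← mul_assoc, left_inv, one_mul]

lemma algHom_convMul_comp_antipode_cancel (φ : H →ₐ[R] B) (h : WithConv (H →ₗ[R] B)) :
    toConv φ.toLinearMap * (toConv (φ.toLinearMap ∘ₗ antipode R) * h) = h := by
  have hφ := LinearMap.algHom_comp_convMul_distrib φ (toConv LinearMap.id)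
    (toConv (antipode R (A := H)))
  have right_inv : toConv φ.toLinearMap * toConv (φ.toLinearMap ∘ₗ antipode R) = 1 := by
    rw [LinearMap.id_mul_antipode] at hφ
    ext x
    simpa using (LinearMap.congr_fun hφ x).symm
  rw [← mul_assoc, right_inv, one_mul]

lemma map_antipode_op_mul (u v : H ⊗[R] H) :
    map (antipode R) (opLinearEquiv R).toLinearMap (u * v) =
      map (antipode R) (opLinearEquiv R).toLinearMap v *
        map (antipode R) (opLinearEquiv R (M := H)).toLinearMap u := by
  induction u with
  | zero => simp
  | add u₁ u₂ h₁ h₂ => simp only [add_mul, mul_add, map_add, h₁, h₂]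
  | tmul a b =>
    induction v with
    | zero => simp
    | add v₁ v₂ h₁ h₂ => simp only [add_mul, mul_add, map_add, h₁, h₂]
    | tmul c d => simp [antipode_mul_antidistrib]

end Antipode

section GroupLikeProjection

variable {k} {B : Type*} [Semiring B] [Algebra k B] {P x : A}

lemma convMul_mul_eq_of_mem_NPrSet (f g : WithConv (A →ₗ[k] B))
    (hg : ∀ a b, g (a * b) = g a * g b) (hx : x ∈ NPrSet k P) :
    (f * g) x * g P = f x * g P := by
  have hx' : comul (R := k) x * ((1 : A) ⊗ₜ[k] P) = x ⊗ₜ[k] P := hx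
  have h := congrArg (LinearMap.mul' k B ∘ₗ map f.ofConv g.ofConv) hx'
  rw [← (ℛ k x).eq] at h
  simpa [(ℛ k x).convMul_apply, Finset.sum_mul, hg, mul_assoc] using h

lemma convMul_mul_eq_of_mem_NPlSet (f g : WithConv (A →ₗ[k] B))
    (hg : ∀ a b, g (a * b) = g b * g a) (hx : x ∈ NPlSet k P) :
    (f * g) x * g P = f x * g P := by
  have hx' : ((1 : A) ⊗ₜ[k] P) * comul (R := k) x = x ⊗ₜ[k] P := hx
  have h := congrArg (LinearMap.mul' k B ∘ₗ map f.ofConv g.ofConv) hx'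
  rw [← (ℛ k x).eq] at h
  simpa [(ℛ k x).convMul_apply, Finset.mul_sum, Finset.sum_mul, hg, mul_assoc] using h

lemma mul_eq_counit_smul_of_mem_NPrSet (hx : x ∈ NPrSet k P) : x * P = counit (R := k) x • P := by
  have h := convMul_mul_eq_of_mem_NPrSet 1 (toConv LinearMap.id) (fun _ _ ↦ rfl) hx
  rw [one_mul] at h
  simpa [Algebra.smul_def] using h

lemma IsRightGroupLikeProjection.counit_ne_zero (hP : IsRightGroupLikeProjection k P) :
    counit (R := k) P ≠ 0 := by
  obtain ⟨hP₀, hPP, hPr, -⟩ := hP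
  intro hε
  have h := mul_eq_counit_smul_of_mem_NPrSet (k := k) (x := P) hPr
  rw [hPP, hε, zero_smul] at h
  exact hP₀ h

-- In Sweedler notation: `S(x) P₁ ⊗ P₂ = S(x₁) x₂ P₁ ⊗ x₃ P₂ = P₁ ⊗ x P₂`.
lemma one_tmul_mul_comul_of_mem_NPrSet (hx : x ∈ NPrSet k P) :
    ((1 : A) ⊗ₜ[k] x) * comul P = (antipode k x ⊗ₜ[k] (1 : A)) * comul P := by
  let ι₁ : A →ₐ[k] A ⊗[k] A := Algebra.TensorProduct.includeLeft
  let ι₂ : A →ₐ[k] A ⊗[k] A := Algebra.TensorProduct.includeRight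
  have h := convMul_mul_eq_of_mem_NPrSet (toConv (ι₁.toLinearMap ∘ₗ antipode k))
    (toConv (comul (R := k))) Bialgebra.comul_mul hx
  have comul_eq : toConv ι₁.toLinearMap * toConv ι₂.toLinearMap = toConv (comul (R := k)) := by
    simpa only [map_id, LinearMap.comp_id, LinearMap.id_comp] using
      includeLeft_comp_convMul_includeRight_comp (R := k) (D := A) .id .id
  rw [← comul_eq, algHom_comp_antipode_convMul_cancel, comul_eq] at h
  exact h

-- In Sweedler notation: `x S(P₁) ⊗ P₂ = x₁ S(P₁ x₂) ⊗ P₂ x₃ = S(P₁) ⊗ P₂ x`. With the second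
-- leg in the opposite algebra, right multiplication by `x` becomes left multiplication.
lemma one_tmul_op_mul_map_antipode_of_mem_NPlSet (hx : x ∈ NPlSet k P) :
    ((1 : A) ⊗ₜ[k] op x) *
        map (antipode k) (opLinearEquiv k).toLinearMap (comul (R := k) P) =
      (x ⊗ₜ[k] (1 : Aᵐᵒᵖ)) *
        map (antipode k) (opLinearEquiv k).toLinearMap (comul (R := k) P) := by
  let ι₁ : A →ₐ[k] A ⊗[k] Aᵐᵒᵖ := Algebra.TensorProduct.includeLeft
  have h := convMul_mul_eq_of_mem_NPlSet (toConv ι₁.toLinearMap)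
    (toConv (map (antipode k) (opLinearEquiv k).toLinearMap ∘ₗ comul (R := k)))
    (fun a b ↦ by simp [Bialgebra.comul_mul, map_antipode_op_mul]) hx
  rw [← includeLeft_comp_convMul_includeRight_comp, algHom_convMul_comp_antipode_cancel,
    includeLeft_comp_convMul_includeRight_comp] at h
  exact h

lemma finiteDimensional_span_NPlSet (hε : counit (R := k) P ≠ 0) :
    FiniteDimensional k (Submodule.span k (NPlSet k P)) := by
  have contraction : LinearMap.mul' k A ((opLinearEquiv k).symm.toLinearMap.lTensor A
      (map (antipode k) (opLinearEquiv k).toLinearMap (comul (R := k) P))) =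
        algebraMap k A (counit P) := by
    rw [← mul_antipode_rTensor_comul_apply, LinearMap.lTensor, map_map]
    simp [LinearMap.rTensor]
  exact finiteDimensional_span_of_tmul_one_mul_eq (contraction ▸ hε.isUnit.map (algebraMap k A))
    fun x hx ↦ ⟨op x, one_tmul_op_mul_map_antipode_of_mem_NPlSet hx⟩

lemma finiteDimensional_span_antipode_image_NPrSet (hε : counit (R := k) P ≠ 0) :
    FiniteDimensional k (Submodule.span k (antipode k '' NPrSet k P)) :=
  finiteDimensional_span_of_tmul_one_mul_eq (f := antipode k)
    ((mul_antipode_lTensor_comul_apply (R := k) P).symm ▸ hε.isUnit.map (algebraMap k A)) <| by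
    rintro _ ⟨x, hx, rfl⟩
    exact ⟨x, one_tmul_mul_comul_of_mem_NPrSet hx⟩

lemma finiteDimensional_span_NPrSet
    (hS : Function.Injective (antipode k : A →ₗ[k] A)) (hε : counit (R := k) P ≠ 0) :
    FiniteDimensional k (Submodule.span k (NPrSet k P)) := by
  have := finiteDimensional_span_antipode_image_NPrSet hε
  rw [Submodule.span_image] at this
  exact .of_injective _ (Submodule.equivMapOfInjective _ hS _).injective

end GroupLikeProjection

theorem statement3_general (P : A) (hP : IsRightGroupLikeProjection k P) :
    FiniteDimensional k (Submodule.span k (NPSet k P)) ∧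
    FiniteDimensional k (Submodule.span k (NPlSet k P)) ∧
    (Function.Injective (antipode k : A →ₗ[k] A) →
      FiniteDimensional k (Submodule.span k (NPrSet k P))) := by
  have hl := finiteDimensional_span_NPlSet hP.counit_ne_zero
  exact ⟨Submodule.finiteDimensional_of_le (Submodule.span_mono Set.inter_subset_left), hl,
    fun hS ↦ finiteDimensional_span_NPrSet hS hP.counit_ne_zero⟩

/-- Theorem: for any right group-like projection `P`, the left coideal subalgebras
`N_P`, `N_P^l` and `N_P^r` are finite-dimensional over `k`. -/
theorem statement3
    (hS : Function.Bijective (HopfAlgebra.antipode (R := k) : A →ₗ[k] A))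
    (P : A) (hP : IsRightGroupLikeProjection k P) :
    FiniteDimensional k ↥(Submodule.span k (NPSet k P)) ∧
    FiniteDimensional k ↥(Submodule.span k (NPlSet k P)) ∧
    FiniteDimensional k ↥(Submodule.span k (NPrSet k P)) := by
  obtain ⟨hN, hl, hr⟩ := statement3_general k P hP
  exact ⟨hN, hl, hr hS.injective⟩
end
end
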